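/- There exist absolute constants c > 0 and C > 0 such that the following holds for all sufficiently large N. Let ν > 0 and let A ⊆ [N] be a set with no non-zero square differences, of density α = |A|/N ≥ N^{-1/3}. Then at least one of the following holds: (1) log(1/α) ≥ c·log N; (2) there exists an integer N' ≥ c·ν·α^C·N and a set A' ⊆ [N'] with no non-zero square differences and density at least (1 + ν/20)·α; (3) there exist reals B, Q ≤ C·α^{−C} and a set 𝓑 ⊆ Q_{≤Q} such that both: (a) for each a/q ∈ 𝓑 there exists γ_{a/q} ∈ (0,1] with ‖γ_{a/q} − a/q‖ ≤ C·α^{−C}/N and Σ_{a/q ∈ 𝓑} |1̂_A(γ_{a/q})| ≥ c·B·|A|·Q^{1/2}/(log(1/α))^C, and (b) for every 1 ≤ q ≤ Q, |𝓑 ∩ Q_{=q}| ≤ ν·B². -/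

import Mathlib

open MeasureTheory

/-- `A` has no non-zero square differences. -/
def NoSquareDiff (A : Finset ℕ) : Prop :=
  ∀ a ∈ A, ∀ b ∈ A, ∀ n : ℕ, 0 < n → a ≠ b + n ^ 2

/-- `e(x) = e^{2πix}`. -/
noncomputable def eu (x : ℝ) : ℂ := Complex.exp (2 * Real.pi * Complex.I * x)

/-- The Fourier transform of the indicator of `A`: `1̂_A(γ) = ∑_{a ∈ A} e(aγ)`. -/
noncomputable def hatInd (A : Finset ℕ) (γ : ℝ) : ℂ := ∑ a ∈ A, eu (a * γ)

/-!
Put `X = 1 / α` and suppose that no set without square differences in an interval of length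
`n ≈ ν N / X ^ 150` has density more than `(1 + ν / 20) α`. Then `A` is nearly equidistributed in
every progression of square modulus and length `n`, because dividing by a square common difference
preserves the absence of square differences.

The set `A` has no square differences, while a balanced function of the same density would have
many. Counting the differences `m ^ 2` with weight `2m` and expanding in frequencies `r / P`, this
discrepancy becomes a sum, weighted by the exponential sum over squares, of `1̂_A` times the
transform of `1_A` minus its average, which away from the integers is essentially `|1̂_A|²`. Weyl's
inequality disposes of the minor arcs, Gauss sums give square-root decay in the denominator on the
major arcs, and equidistribution makes the arcs around the integers negligible. Hence
`∑ |1̂_A(γ_x)|² / √(den x)` over the Farey fractions `x` is at least of order `|A|² / log X`.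
Dyadic pigeonholing in the size of `1̂_A(γ_x)` and in the denominator yields `B`, `Q` and `𝓑`. The
number of elements of `𝓑` with a given denominator `q` is bounded by Plancherel on `ℤ/q`, where
equidistribution is used once more. If `ν log X` is not small, `𝓑 = {1}` suffices.
-/

/-! ### The exponential `eu` -/

section Exponential

lemma eu_eq_fourierChar (x : ℝ) : eu x = Real.fourierChar x := by
  rw [eu, Real.fourierChar_apply]; push_cast; ring_nf

@[simp] lemma norm_eu (x : ℝ) : ‖eu x‖ = 1 := by
  rw [eu_eq_fourierChar, Circle.norm_coe]

lemma eu_add (x y : ℝ) : eu (x + y) = eu x * eu y := by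
  simp only [eu_eq_fourierChar, AddChar.map_add_eq_mul, Circle.coe_mul]

lemma conj_eu (x : ℝ) : (starRingEnd ℂ) (eu x) = eu (-x) := by
  simp only [eu_eq_fourierChar, AddChar.map_neg_eq_inv, Circle.coe_inv_eq_conj]

lemma eu_natCast_mul (n : ℕ) (x : ℝ) : eu (n * x) = eu x ^ n := by
  rw [eu_eq_fourierChar, eu_eq_fourierChar, ← nsmul_eq_mul, AddChar.map_nsmul_eq_pow,
    Circle.coe_pow]

lemma eu_eq_one_iff {x : ℝ} : eu x = 1 ↔ ∃ k : ℤ, x = k := by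
  rw [eu, Complex.exp_eq_one_iff]
  refine exists_congr fun k => ?_
  rw [mul_comm (k : ℂ), mul_right_inj' Complex.two_pi_I_ne_zero]
  norm_cast

@[simp] lemma eu_intCast (k : ℤ) : eu k = 1 := eu_eq_one_iff.2 ⟨k, rfl⟩

lemma eu_eq_of_sub_eq {x y : ℝ} (k : ℤ) (h : x - y = k) : eu x = eu y := by
  rw [← sub_add_cancel x y, h, eu_add, eu_intCast, one_mul]

lemma norm_eu_sub_one (x : ℝ) : ‖eu x - 1‖ = 2 * |Real.sin (Real.pi * x)| := by
  have h : eu x = Complex.exp (Complex.I * ((2 * Real.pi * x : ℝ) : ℂ)) := by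
    rw [eu]; push_cast; ring_nf
  rw [h, Complex.norm_exp_I_mul_ofReal_sub_one, Real.norm_eq_abs, abs_mul, abs_two]
  ring_nf

lemma norm_eu_sub_one_le (x : ℝ) : ‖eu x - 1‖ ≤ 2 * Real.pi * |x| := by
  have h := Real.abs_sin_le_abs (x := Real.pi * x)
  rw [abs_mul, abs_of_pos Real.pi_pos] at h
  rw [norm_eu_sub_one]
  linarith

lemma le_norm_eu_sub_one {x : ℝ} (hx : |x| ≤ 1 / 2) : 4 * |x| ≤ ‖eu x - 1‖ := by
  have habs : |Real.pi * x| = Real.pi * |x| := by rw [abs_mul, abs_of_pos Real.pi_pos]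
  have h := Real.mul_abs_le_abs_sin (x := Real.pi * x) (by
    rw [habs]; nlinarith [Real.pi_pos])
  rw [habs, ← mul_assoc, div_mul_cancel₀ _ Real.pi_ne_zero] at h
  rw [norm_eu_sub_one]
  linarith

lemma norm_eu_sub_eu_le (x y : ℝ) : ‖eu x - eu y‖ ≤ 2 * Real.pi * |x - y| := by
  have h : eu x - eu y = eu y * (eu (x - y) - 1) := by
    rw [mul_sub, ← eu_add, add_sub_cancel, mul_one]
  rw [h, norm_mul, norm_eu, one_mul]
  exact norm_eu_sub_one_le _

lemma norm_sum_range_eu_le_card (n : ℕ) (x : ℝ) : ‖∑ u ∈ Finset.range n, eu (u * x)‖ ≤ n := by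
  simpa using norm_sum_le (Finset.range n) fun u => eu (u * x)

lemma norm_sum_range_eu_le (n : ℕ) {x : ℝ} (m : ℤ) (h0 : x ≠ m) (h : |x - m| ≤ 1 / 2) :
    ‖∑ u ∈ Finset.range n, eu (u * x)‖ ≤ 1 / (2 * |x - m|) := by
  have hpos : 0 < |x - m| := abs_pos.2 (sub_ne_zero.2 h0)
  have hlow : 4 * |x - m| ≤ ‖eu x - 1‖ := by
    rw [eu_eq_of_sub_eq m (sub_sub_cancel x m) (x := x)]
    exact le_norm_eu_sub_one h
  have hne : eu x ≠ 1 := sub_ne_zero.1 (norm_pos_iff.1 (by linarith))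
  have hnum : ‖eu x ^ n - 1‖ ≤ 2 := by
    refine (norm_sub_le _ _).trans ?_
    rw [norm_pow, norm_eu, one_pow, norm_one]
    norm_num
  simp_rw [eu_natCast_mul]
  rw [geom_sum_eq hne, norm_div, div_le_div_iff₀ (by linarith) (by linarith)]
  nlinarith

lemma sum_Icc_eu_div_mul {P : ℕ} (hP : 0 < P) (k : ℤ) :
    ∑ r ∈ Finset.Icc 1 P, eu ((r : ℝ) / P * k) = if (P : ℤ) ∣ k then (P : ℂ) else 0 := by
  have hP' : (P : ℝ) ≠ 0 := by positivity
  have hdvd : (P : ℤ) ∣ k ↔ eu (k / P) = 1 := by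
    rw [eu_eq_one_iff]
    refine exists_congr fun t => ?_
    rw [div_eq_iff hP', mul_comm]
    norm_cast
  have hpow : ∀ r : ℕ, eu ((r : ℝ) / P * k) = eu (k / P) ^ r := fun r => by
    rw [← eu_natCast_mul]; congr 1; ring
  simp only [hpow, hdvd]
  split_ifs with h
  · simp [h]
  · have hper : eu (k / P) ^ P = 1 := by
      rw [← eu_natCast_mul, mul_div_cancel₀ _ hP', eu_intCast]
    rw [← Finset.Ico_add_one_right_eq_Icc, geom_sum_Ico h (by omega), pow_succ, hper]
    simp

end Exponential

section GaussSum

lemma card_two_mul_eq_zero_le (q : ℕ) [NeZero q] :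
    (Finset.univ.filter fun h : ZMod q => 2 * h = 0).card ≤ 2 := by
  rw [← Finset.card_image_of_injective _ (ZMod.val_injective q)]
  refine (Finset.card_le_card (t := {0, q / 2}) fun v hv => ?_).trans Finset.card_le_two
  simp only [Finset.mem_image, Finset.mem_filter, Finset.mem_univ, true_and] at hv
  obtain ⟨h, hh, rfl⟩ := hv
  obtain ⟨t, ht⟩ : q ∣ 2 * h.val := by
    rw [← ZMod.natCast_eq_zero_iff, Nat.cast_mul, ZMod.natCast_zmod_val]
    exact_mod_cast hh
  have hlt := ZMod.val_lt h
  have ht2 : t < 2 := lt_of_mul_lt_mul_left (by omega) (Nat.zero_le q)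
  simp only [Finset.mem_insert, Finset.mem_singleton]
  interval_cases t <;> omega

lemma sum_range_eq_sum_zmod (q : ℕ) [NeZero q] (f : ZMod q → ℂ) :
    ∑ n ∈ Finset.range q, f n = ∑ n : ZMod q, f n :=
  Finset.sum_bij' (fun n _ => (n : ZMod q)) (fun z _ => z.val) (by simp)
    (fun z _ => by simpa using ZMod.val_lt z)
    (fun n hn => ZMod.val_cast_of_lt (by simpa using hn)) (by simp) (by simp)

/- Substituting `n = m + h` in the double sum linearises the phase in `m`; orthogonality then leaves
only `2 h = 0`. -/
lemma norm_sum_addChar_sq_sq {R : Type*} [CommRing R] [Fintype R] [DecidableEq R]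
    {ψ : AddChar R ℂ} (hψ : ψ.IsPrimitive) {a : R} (ha : IsUnit a) :
    ((‖∑ n, ψ (a * n ^ 2)‖ ^ 2 : ℝ) : ℂ) =
      Fintype.card R * ∑ h with 2 * h = 0, ψ (a * h ^ 2) := by
  have hshift : ∀ m : R, ∑ n, ψ (a * n ^ 2) * (starRingEnd ℂ) (ψ (a * m ^ 2)) =
      ∑ h, ψ (a * h ^ 2) * ψ (m * (a * (2 * h))) := fun m => by
    rw [← Equiv.sum_comp (Equiv.addRight m)]
    refine Finset.sum_congr rfl fun h _ => ?_
    rw [← AddChar.map_neg_eq_conj, ← AddChar.map_add_eq_mul, ← AddChar.map_add_eq_mul,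
      Equiv.coe_addRight]
    ring_nf
  push_cast
  rw [← Complex.mul_conj', map_sum, Finset.sum_mul_sum, Finset.sum_comm,
    Finset.sum_congr rfl fun m _ => hshift m, Finset.sum_comm, Finset.mul_sum, Finset.sum_filter]
  refine Finset.sum_congr rfl fun h _ => ?_
  rw [← Finset.mul_sum, AddChar.sum_mulShift _ hψ]
  simp only [ha.mul_right_eq_zero, Nat.cast_ite, Nat.cast_zero, mul_comm (ψ _), ite_mul,
    zero_mul]

/-- The mean `q⁻¹ ∑_{n < q} e(a n² / q)` of the quadratic phase with rational frequency `a / q`. -/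
noncomputable def gaussMean (a : ℤ) (q : ℕ) : ℂ :=
  (∑ n ∈ Finset.range q, eu ((n : ℝ) ^ 2 * (a / q))) / q

lemma norm_gaussMean_le_one (a : ℤ) (q : ℕ) : ‖gaussMean a q‖ ≤ 1 := by
  rw [gaussMean, norm_div, Complex.norm_natCast]
  refine div_le_one_of_le₀ ?_ q.cast_nonneg
  simpa using norm_sum_le (Finset.range q) fun n => eu ((n : ℝ) ^ 2 * (a / q))

lemma norm_gaussMean_le {q : ℕ} (hq : 0 < q) {a : ℤ} (ha : IsCoprime a (q : ℤ)) :
    ‖gaussMean a q‖ ≤ 2 / √q := by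
  have : NeZero q := ⟨hq.ne'⟩
  set ψ : AddChar (ZMod q) ℂ := ZMod.stdAddChar
  have hunit : IsUnit (a : ZMod q) := by
    simpa [isCoprime_zero_right] using ha.map (Int.castRingHom (ZMod q))
  have hsum : ∑ n ∈ Finset.range q, eu ((n : ℝ) ^ 2 * (a / q)) = ∑ n : ZMod q, ψ (a * n ^ 2) := by
    rw [← sum_range_eq_sum_zmod q fun n => ψ (a * n ^ 2)]
    refine Finset.sum_congr rfl fun n _ => ?_
    have hcast : (a : ZMod q) * (n : ZMod q) ^ 2 = ((a * n ^ 2 : ℤ) : ZMod q) := by push_cast; rfl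
    rw [hcast, ZMod.stdAddChar_coe, eu]
    push_cast; ring_nf
  have hsq : ‖∑ n : ZMod q, ψ (a * n ^ 2)‖ ^ 2 ≤ q * 2 := by
    have h := congrArg norm (norm_sum_addChar_sq_sq (ZMod.isPrimitive_stdAddChar q) hunit)
    rw [Complex.norm_real, Real.norm_of_nonneg (by positivity), norm_mul, Complex.norm_natCast,
      ZMod.card] at h
    rw [h]
    gcongr
    refine (norm_sum_le _ _).trans ?_
    simp only [AddChar.norm_apply, Finset.sum_const, nsmul_eq_mul, mul_one]
    exact_mod_cast card_two_mul_eq_zero_le q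
  have hqR : (0 : ℝ) < q := by exact_mod_cast hq
  rw [gaussMean, norm_div, Complex.norm_natCast, hsum, div_le_div_iff₀ hqR (by positivity)]
  refine (abs_le_of_sq_le_sq' ?_ (by positivity)).2
  rw [mul_pow, Real.sq_sqrt hqR.le]
  nlinarith

end GaussSum

section WeightedSquares

/-- The exponential sum `∑_{n ≤ M} 2n e(n²γ)` over squares. The weight `2n ≈ n² - (n - 1)²` makes
the squares behave like an interval. -/
noncomputable def sqSum (M : ℕ) (γ : ℝ) : ℂ :=
  ∑ n ∈ Finset.range (M + 1), (2 * n : ℂ) * eu ((n : ℝ) ^ 2 * γ)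

lemma norm_sum_mul_le_of_partial_sums (φ g : ℕ → ℂ) {G : ℝ} (n : ℕ)
    (hG : ∀ m ≤ n + 1, ‖∑ i ∈ Finset.range m, g i‖ ≤ G) :
    ‖∑ i ∈ Finset.range (n + 1), φ i * g i‖ ≤
      G * (‖φ n‖ + ∑ i ∈ Finset.range n, ‖φ (i + 1) - φ i‖) := by
  have h := Finset.sum_range_by_parts φ g (n + 1)
  simp only [smul_eq_mul, Nat.add_sub_cancel] at h
  rw [h, mul_add]
  refine (norm_sub_le _ _).trans (add_le_add ?_ ?_)
  · rw [norm_mul, mul_comm]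
    exact mul_le_mul_of_nonneg_right (hG _ le_rfl) (norm_nonneg _)
  · rw [Finset.mul_sum]
    refine (norm_sum_le _ _).trans (Finset.sum_le_sum fun i hi => ?_)
    rw [norm_mul, mul_comm]
    have hi' : i + 1 ≤ n + 1 := by grind
    exact mul_le_mul_of_nonneg_right (hG _ hi') (norm_nonneg _)

lemma norm_sum_range_le_of_periodic {q : ℕ} (hq : 0 < q) {g : ℕ → ℂ} {b : ℝ} (hb : 0 ≤ b)
    (hper : ∀ n, g (q + n) = g n) (hsum : ∑ i ∈ Finset.range q, g i = 0) (hg : ∀ n, ‖g n‖ ≤ b)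
    (m : ℕ) : ‖∑ i ∈ Finset.range m, g i‖ ≤ b * q := by
  induction m using Nat.strong_induction_on with
  | _ m ih =>
    by_cases hm : m < q
    · calc ‖∑ i ∈ Finset.range m, g i‖ ≤ ∑ _i ∈ Finset.range m, b :=
            norm_sum_le_of_le _ fun i _ => hg i
        _ = b * m := by simp [mul_comm]
        _ ≤ b * q := by gcongr
    · obtain ⟨m', rfl⟩ := Nat.exists_eq_add_of_le (not_lt.1 hm)
      rw [Finset.sum_range_add, hsum, zero_add, Finset.sum_congr rfl fun i _ => hper i]
      exact ih m' (by omega)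

lemma norm_sum_eu_sub_gaussMean_le {q : ℕ} (hq : 0 < q) (a : ℤ) (m : ℕ) :
    ‖∑ n ∈ Finset.range m, (eu ((n : ℝ) ^ 2 * (a / q)) - gaussMean a q)‖ ≤ 2 * q := by
  have hqR : (q : ℝ) ≠ 0 := by positivity
  refine norm_sum_range_le_of_periodic hq zero_le_two (fun n => ?_) ?_ (fun n => ?_) m
  · congr 1
    refine eu_eq_of_sub_eq (a * (q + 2 * n)) ?_
    push_cast; field_simp; ring
  · have hqC : (q : ℂ) ≠ 0 := by exact_mod_cast hq.ne'
    rw [Finset.sum_sub_distrib, Finset.sum_const, Finset.card_range, nsmul_eq_mul, gaussMean,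
      mul_div_cancel₀ _ hqC, sub_self]
  · refine (norm_sub_le _ _).trans ?_
    rw [norm_eu]
    linarith [norm_gaussMean_le_one a q]

lemma norm_sqSum_term_succ_sub_le {n M : ℕ} (hn : n < M) (β : ℝ) :
    ‖(2 * (n + 1 : ℕ) : ℂ) * eu (((n + 1 : ℕ) : ℝ) ^ 2 * β) -
        (2 * n : ℂ) * eu ((n : ℝ) ^ 2 * β)‖ ≤ 2 + 26 * M ^ 2 * |β| := by
  have hn' : (n : ℝ) + 1 ≤ M := by exact_mod_cast hn
  have hdiff : ‖eu (((n + 1 : ℕ) : ℝ) ^ 2 * β) - eu ((n : ℝ) ^ 2 * β)‖ ≤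
      2 * Real.pi * ((2 * n + 1) * |β|) := by
    refine (norm_eu_sub_eu_le _ _).trans_eq ?_
    rw [← sub_mul, abs_mul, ← abs_of_nonneg (by positivity : (0 : ℝ) ≤ 2 * n + 1)]
    push_cast; ring_nf
  have hsplit : (2 * (n + 1 : ℕ) : ℂ) * eu (((n + 1 : ℕ) : ℝ) ^ 2 * β) -
      (2 * n : ℂ) * eu ((n : ℝ) ^ 2 * β) = 2 * eu (((n + 1 : ℕ) : ℝ) ^ 2 * β) +
        (2 * n : ℂ) * (eu (((n + 1 : ℕ) : ℝ) ^ 2 * β) - eu ((n : ℝ) ^ 2 * β)) := by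
    push_cast; ring
  rw [hsplit]
  refine (norm_add_le _ _).trans (add_le_add (by simp) ?_)
  calc ‖(2 * n : ℂ) * (eu (((n + 1 : ℕ) : ℝ) ^ 2 * β) - eu ((n : ℝ) ^ 2 * β))‖
      = 2 * n * ‖eu (((n + 1 : ℕ) : ℝ) ^ 2 * β) - eu ((n : ℝ) ^ 2 * β)‖ := by simp
    _ ≤ 2 * n * (2 * Real.pi * ((2 * n + 1) * |β|)) := by gcongr
    _ = Real.pi * ((2 * n) * (2 * n + 1) * 2 * |β|) := by ring
    _ ≤ 3.15 * ((2 * M) * (2 * M) * 2 * |β|) := by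
        have hpi := Real.pi_lt_d2
        have h2 : (2 * n : ℝ) + 1 ≤ 2 * M := by linarith
        have h3 : (2 * n : ℝ) ≤ 2 * M := by linarith
        gcongr
    _ ≤ 26 * M ^ 2 * |β| := by nlinarith [mul_nonneg (sq_nonneg (M : ℝ)) (abs_nonneg β)]

lemma norm_sqSum_sub_gaussMean_mul_le (M : ℕ) {q : ℕ} (hq : 0 < q) (a : ℤ) (β : ℝ) :
    ‖sqSum M (a / q + β) - gaussMean a q * sqSum M β‖ ≤
      8 * q * M + 52 * q * M ^ 3 * |β| := by
  set φ : ℕ → ℂ := fun n => (2 * n : ℂ) * eu ((n : ℝ) ^ 2 * β)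
  have hsub : sqSum M (a / q + β) - gaussMean a q * sqSum M β =
      ∑ n ∈ Finset.range (M + 1), φ n * (eu ((n : ℝ) ^ 2 * (a / q)) - gaussMean a q) := by
    rw [sqSum, sqSum, Finset.mul_sum, ← Finset.sum_sub_distrib]
    refine Finset.sum_congr rfl fun n _ => ?_
    rw [mul_add, eu_add]; ring
  have hlast : ‖φ M‖ = 2 * M := by simp [φ]
  have hvar : ∑ n ∈ Finset.range M, ‖φ (n + 1) - φ n‖ ≤ M * (2 + 26 * M ^ 2 * |β|) := by
    refine (Finset.sum_le_sum fun n hn =>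
      norm_sqSum_term_succ_sub_le (Finset.mem_range.1 hn) β).trans_eq ?_
    rw [Finset.sum_const, Finset.card_range, nsmul_eq_mul]
  rw [hsub]
  calc _ ≤ 2 * q * (‖φ M‖ + ∑ n ∈ Finset.range M, ‖φ (n + 1) - φ n‖) :=
        norm_sum_mul_le_of_partial_sums φ _ M fun m _ => norm_sum_eu_sub_gaussMean_le hq a m
    _ ≤ 2 * q * (2 * M + M * (2 + 26 * M ^ 2 * |β|)) := by rw [hlast]; gcongr
    _ = 8 * q * M + 52 * q * M ^ 3 * |β| := by ring

lemma norm_sum_range_eu_sub_le (M : ℕ) (β : ℝ) :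
    ‖∑ j ∈ Finset.range (2 * (M + 1)), (eu (((M + 1 : ℕ) : ℝ) ^ 2 * β) -
        eu (((M * (M + 1) + j : ℕ) : ℝ) * β))‖ ≤ 4 * Real.pi * (M + 1) ^ 2 * |β| := by
  have hterm : ∀ j ∈ Finset.range (2 * (M + 1)), ‖eu (((M + 1 : ℕ) : ℝ) ^ 2 * β) -
      eu (((M * (M + 1) + j : ℕ) : ℝ) * β)‖ ≤ 2 * Real.pi * ((M + 1) * |β|) := fun j hj => by
    have hj' : (j : ℝ) ≤ 2 * (M + 1) := by exact_mod_cast (Finset.mem_range.1 hj).le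
    have hgap : |(M : ℝ) + 1 - j| ≤ M + 1 :=
      abs_le.2 ⟨by linarith, by linarith [j.cast_nonneg (α := ℝ)]⟩
    have hsub : ((M + 1 : ℕ) : ℝ) ^ 2 * β - ((M * (M + 1) + j : ℕ) : ℝ) * β =
        ((M : ℝ) + 1 - j) * β := by push_cast; ring
    refine (norm_eu_sub_eu_le _ _).trans ?_
    rw [hsub, abs_mul]
    gcongr
  refine (norm_sum_le_of_le _ hterm).trans_eq ?_
  rw [Finset.sum_const, Finset.card_range, nsmul_eq_mul]
  push_cast; ring

lemma norm_sqSum_sub_sum_range_le (M : ℕ) (β : ℝ) :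
    ‖sqSum M β - ∑ u ∈ Finset.range (M * (M + 1)), eu (u * β)‖ ≤ 4 * Real.pi * M ^ 3 * |β| := by
  induction M with
  | zero => simp [sqSum]
  | succ M ih =>
    have hlen : (M + 1) * (M + 1 + 1) = M * (M + 1) + 2 * (M + 1) := by ring
    have hterm : (2 * (M + 1 : ℕ) : ℂ) * eu (((M + 1 : ℕ) : ℝ) ^ 2 * β) =
        ∑ _j ∈ Finset.range (2 * (M + 1)), eu (((M + 1 : ℕ) : ℝ) ^ 2 * β) := by
      rw [Finset.sum_const, Finset.card_range, nsmul_eq_mul]; push_cast; ring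
    have hsplit : sqSum (M + 1) β - ∑ u ∈ Finset.range ((M + 1) * (M + 1 + 1)), eu (u * β) =
        (sqSum M β - ∑ u ∈ Finset.range (M * (M + 1)), eu (u * β)) +
        ∑ j ∈ Finset.range (2 * (M + 1)), (eu (((M + 1 : ℕ) : ℝ) ^ 2 * β) -
          eu (((M * (M + 1) + j : ℕ) : ℝ) * β)) := by
      rw [hlen, Finset.sum_range_add, Finset.sum_sub_distrib, ← hterm, sqSum,
        Finset.sum_range_succ, ← sqSum]
      ring
    rw [hsplit]
    refine (norm_add_le_of_le ih (norm_sum_range_eu_sub_le M β)).trans ?_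
    have hpos : 0 ≤ Real.pi * |β| := by positivity
    have hM : (0 : ℝ) ≤ M := M.cast_nonneg
    push_cast
    nlinarith [mul_nonneg hpos hM, mul_nonneg hpos (sq_nonneg (M : ℝ))]

lemma norm_sqSum_rat_add_le (M : ℕ) {q : ℕ} (hq : 0 < q) {a : ℤ} (ha : IsCoprime a (q : ℤ))
    (β : ℝ) :
    ‖sqSum M (a / q + β)‖ ≤
      2 / √q * ‖∑ u ∈ Finset.range (M * (M + 1)), eu (u * β)‖ +
        100 * q * M * (1 + M ^ 2 * |β|) := by
  have hq1 : (1 : ℝ) ≤ q := by exact_mod_cast hq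
  set G := gaussMean a q
  set V := ∑ u ∈ Finset.range (M * (M + 1)), eu (u * β)
  have hsplit : sqSum M (a / q + β) =
      G * V + (G * (sqSum M β - V) + (sqSum M (a / q + β) - G * sqSum M β)) := by ring
  have hmain : ‖G * V‖ ≤ 2 / √q * ‖V‖ := by
    rw [norm_mul]
    exact mul_le_mul_of_nonneg_right (norm_gaussMean_le hq ha) (norm_nonneg _)
  have hsmooth : ‖G * (sqSum M β - V)‖ ≤ 13 * q * M ^ 3 * |β| := by
    rw [norm_mul]
    calc ‖G‖ * ‖sqSum M β - V‖ ≤ 1 * (4 * Real.pi * M ^ 3 * |β|) :=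
          mul_le_mul (norm_gaussMean_le_one a q) (norm_sqSum_sub_sum_range_le M β)
            (norm_nonneg _) zero_le_one
      _ ≤ q * (13 * M ^ 3 * |β|) := by
          gcongr
          linarith [Real.pi_lt_d2]
      _ = 13 * q * M ^ 3 * |β| := by ring
  have herr := norm_sqSum_sub_gaussMean_mul_le M hq a β
  have hpos : 0 ≤ (q : ℝ) * M ^ 3 * |β| := by positivity
  have hpos' : 0 ≤ (q : ℝ) * M := by positivity
  rw [hsplit]
  refine (norm_add_le_of_le hmain (norm_add_le_of_le hsmooth herr)).trans ?_
  nlinarith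

end WeightedSquares

section Weyl

lemma sq_norm_sum_add_sum_sq (a : ℕ → ℂ) (m : ℕ) :
    ‖∑ i ∈ Finset.range m, a i‖ ^ 2 + ∑ i ∈ Finset.range m, ‖a i‖ ^ 2 =
      2 * (∑ h ∈ Finset.range m, ∑ j ∈ Finset.range (m - h),
        a (h + j) * (starRingEnd ℂ) (a j)).re := by
  have hdiag : ∑ h ∈ Finset.range m, ∑ j ∈ Finset.range (m - h),
      a (h + j) * (starRingEnd ℂ) (a j) =
      ∑ i ∈ Finset.range m, ∑ k ∈ Finset.range (i + 1), a i * (starRingEnd ℂ) (a k) := by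
    rw [← Finset.sum_range_diag_flip m fun h j => a (h + j) * (starRingEnd ℂ) (a j)]
    refine Finset.sum_congr rfl fun i _ => ?_
    rw [← Finset.sum_flip]
    refine Finset.sum_congr rfl fun k hk => ?_
    have hki : k ≤ i := by grind
    rw [Nat.sub_sub_self hki, Nat.sub_add_cancel hki]
  rw [hdiag]
  clear hdiag
  induction m with
  | zero => simp
  | succ m ih =>
    rw [Finset.sum_range_succ, Finset.sum_range_succ (fun i => ‖a i‖ ^ 2),
      Finset.sum_range_succ (fun i => ∑ k ∈ Finset.range (i + 1), _), Complex.add_re, mul_add,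
      ← ih, Finset.sum_range_succ, ← Finset.mul_sum, ← map_sum]
    simp only [Complex.sq_norm, Complex.normSq_apply, Complex.add_re, Complex.add_im,
      Complex.mul_re, Complex.conj_re, Complex.conj_im]
    ring

lemma sq_norm_sum_range_le (a : ℕ → ℂ) (m : ℕ) :
    ‖∑ i ∈ Finset.range m, a i‖ ^ 2 ≤
      2 * ∑ h ∈ Finset.range m,
        ‖∑ j ∈ Finset.range (m - h), a (h + j) * (starRingEnd ℂ) (a j)‖ := by
  have hid := sq_norm_sum_add_sum_sq a m
  have hdiag : 0 ≤ ∑ i ∈ Finset.range m, ‖a i‖ ^ 2 := Finset.sum_nonneg fun _ _ => by positivity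
  have hre := (Complex.re_le_norm _).trans (norm_sum_le (Finset.range m)
    fun h => ∑ j ∈ Finset.range (m - h), a (h + j) * (starRingEnd ℂ) (a j))
  linarith

lemma eq_zero_of_abs_natCast_mul_sub_lt {γ : ℝ} {q : ℕ} (hq : 0 < q) {a : ℤ}
    (ha : IsCoprime a (q : ℤ)) (hγ : |γ - a / q| ≤ 1 / (q : ℝ) ^ 2) {d : ℕ} (hd : 2 * d ≤ q)
    {m : ℤ} (hm : |d * γ - m| * (2 * q) < 1) : d = 0 := by
  have hqR : (0 : ℝ) < q := by exact_mod_cast hq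
  have hdR : (d : ℝ) ≤ q / 2 := by
    rw [le_div_iff₀' two_pos]; exact_mod_cast hd
  have herr : |d * q * (γ - a / q)| ≤ 1 / 2 := by
    rw [abs_mul, abs_of_nonneg (by positivity)]
    calc d * q * |γ - a / q| ≤ (q / 2) * q * (1 / (q : ℝ) ^ 2) := by gcongr
      _ = 1 / 2 := by field_simp
  have hnear : |(d * γ - m) * q| < 1 / 2 := by
    rw [abs_mul, abs_of_pos hqR]; linarith
  have hinteger : |d * a - m * q| < 1 := by
    have hsplit : ((d * a - m * q : ℤ) : ℝ) = (d * γ - m) * q - d * q * (γ - a / q) := by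
      push_cast; field_simp; ring
    have h : |((d * a - m * q : ℤ) : ℝ)| < 1 := by
      rw [hsplit]; exact (abs_sub _ _).trans_lt (by linarith)
    exact_mod_cast h
  have hdvd : (q : ℤ) ∣ d * a := ⟨m, by linarith [Int.abs_lt_one_iff.1 hinteger]⟩
  have hdvd' : q ∣ d := Int.natCast_dvd_natCast.1 (ha.symm.dvd_of_dvd_mul_right hdvd)
  by_contra h0
  have := Nat.le_of_dvd (Nat.pos_of_ne_zero h0) hdvd'
  omega

lemma card_Icc_floor_neg_floor_le {x : ℝ} (hx : 0 ≤ x) :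
    ((Finset.Icc ⌊-x⌋ ⌊x⌋).card : ℝ) ≤ 2 * x + 2 := by
  have hle : ⌊-x⌋ ≤ ⌊x⌋ := Int.floor_le_floor (by linarith)
  have hcard : ((Finset.Icc ⌊-x⌋ ⌊x⌋).card : ℝ) = ⌊x⌋ + 1 - ⌊-x⌋ := by
    rw [Int.card_Icc]
    exact_mod_cast congrArg (Int.cast : ℤ → ℝ) (Int.toNat_of_nonneg (by omega))
  rw [hcard]
  linarith [Int.floor_le x, Int.lt_floor_add_one (-x)]

lemma natCast_div_half_add_one_le (L : ℕ) {q : ℕ} (hq : 0 < q) :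
    ((L / ((q + 1) / 2) + 1 : ℕ) : ℝ) ≤ 2 * L / q + 1 := by
  have hhalf : (q : ℝ) / 2 ≤ ((q + 1) / 2 : ℕ) := by
    rw [div_le_iff₀ two_pos]; exact_mod_cast (by omega : q ≤ (q + 1) / 2 * 2)
  have hdiv : ((L / ((q + 1) / 2) : ℕ) : ℝ) ≤ L / (q / 2) := Nat.cast_div_le.trans (by gcongr)
  rw [div_div_eq_mul_div, mul_comm] at hdiv
  push_cast
  linarith

/- Two multiples `h γ`, `h' γ` with `|h - h'| ≤ q / 2` have fractional parts at least `1 / (2q)`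
apart. -/
lemma card_near_int_le {γ δ : ℝ} {q : ℕ} (hq : 0 < q) {a : ℤ} (ha : IsCoprime a (q : ℤ))
    (hγ : |γ - a / q| ≤ 1 / (q : ℝ) ^ 2) (L : ℕ) (hδ : 0 ≤ δ) :
    (((Finset.range L).filter fun h : ℕ => |h * γ - round (h * γ)| ≤ δ).card : ℝ) ≤
      (2 * L / q + 1) * (4 * q * δ + 2) := by
  set b := (q + 1) / 2
  have hb0 : 0 < b := by omega
  set cell : ℕ → ℕ × ℤ := fun h => (h / b, ⌊2 * q * (h * γ - round (h * γ))⌋)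
  have hmaps : ∀ h ∈ (Finset.range L).filter fun h : ℕ => |h * γ - round (h * γ)| ≤ δ,
      cell h ∈ Finset.range (L / b + 1) ×ˢ Finset.Icc ⌊-(2 * q * δ)⌋ ⌊2 * q * δ⌋ := fun h hh => by
    rw [Finset.mem_filter, Finset.mem_range, abs_le] at hh
    rw [Finset.mem_product, Finset.mem_range, Finset.mem_Icc]
    exact ⟨Nat.lt_succ_of_le (Nat.div_le_div_right hh.1.le),
      Int.floor_le_floor (by nlinarith [hh.2.1]), Int.floor_le_floor (by nlinarith [hh.2.2])⟩
  have hinj : ∀ h h' : ℕ, h ≤ h' → cell h = cell h' → h = h' := fun h h' hle heq => by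
    obtain ⟨d, rfl⟩ := Nat.exists_eq_add_of_le hle
    obtain ⟨hblock, hfloor⟩ := Prod.mk.inj heq
    have hd : 2 * d ≤ q := by
      have e1 := Nat.div_add_mod h b
      have e2 := Nat.div_add_mod (h + d) b
      have m2 := Nat.mod_lt (h + d) hb0
      rw [hblock] at e1
      omega
    have hlt := Int.abs_sub_lt_one_of_floor_eq_floor hfloor
    have hd0 := eq_zero_of_abs_natCast_mul_sub_lt hq ha hγ hd
      (m := round (((h + d : ℕ) : ℝ) * γ) - round (h * γ)) (by
        rw [← abs_neg, ← abs_of_pos (by positivity : (0 : ℝ) < 2 * q), ← abs_mul]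
        refine lt_of_eq_of_lt (congrArg abs ?_) hlt
        push_cast; ring)
    omega
  have hcard := Finset.card_le_card_of_injOn cell hmaps fun h _ h' _ heq =>
    (le_total h h').elim (hinj h h' · heq) fun hle => (hinj h' h hle heq.symm).symm
  rw [Finset.card_product, Finset.card_range] at hcard
  refine (Nat.cast_le.2 hcard).trans ?_
  rw [Nat.cast_mul]
  have hblocks : ((L / b + 1 : ℕ) : ℝ) ≤ 2 * L / q + 1 := natCast_div_half_add_one_le L hq
  have hfloors := card_Icc_floor_neg_floor_le (by positivity : 0 ≤ 2 * q * δ)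
  exact mul_le_mul hblocks (hfloors.trans_eq (by ring)) (Nat.cast_nonneg _) (by positivity)

lemma norm_sum_range_eu_le_ite {δ : ℝ} (hδ : 0 < δ) (n : ℕ) (x : ℝ) :
    ‖∑ u ∈ Finset.range n, eu (u * x)‖ ≤
      (if |x - round x| ≤ δ then (n : ℝ) else 0) + 1 / (2 * δ) := by
  split_ifs with hx
  · exact (norm_sum_range_eu_le_card n x).trans (le_add_of_nonneg_right (by positivity))
  · push Not at hx
    have hne : x ≠ round x := sub_ne_zero.1 (abs_pos.1 (hδ.trans hx))
    rw [zero_add]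
    exact (norm_sum_range_eu_le n _ hne (abs_sub_round x)).trans (by gcongr)

lemma norm_sum_eu_sq_mul_conj (h n : ℕ) (γ : ℝ) :
    ‖∑ j ∈ Finset.range n, eu (((h + j : ℕ) : ℝ) ^ 2 * γ) *
      (starRingEnd ℂ) (eu ((j : ℝ) ^ 2 * γ))‖ =
      ‖∑ j ∈ Finset.range n, eu (j * ((2 * h : ℕ) * γ))‖ := by
  rw [← one_mul ‖∑ j ∈ Finset.range n, eu (j * ((2 * h : ℕ) * γ))‖,
    ← norm_eu ((h : ℝ) ^ 2 * γ), ← norm_mul, Finset.mul_sum]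
  congr 1
  refine Finset.sum_congr rfl fun j _ => ?_
  rw [conj_eu, ← eu_add, ← eu_add]; push_cast; ring_nf

lemma sq_norm_sum_range_sq_eu_le {γ δ : ℝ} {q : ℕ} (hq : 0 < q) {a : ℤ}
    (ha : IsCoprime a (q : ℤ)) (hγ : |γ - a / q| ≤ 1 / (q : ℝ) ^ 2) (hδ : 0 < δ) {m L : ℕ}
    (hm : m ≤ L) :
    ‖∑ n ∈ Finset.range m, eu ((n : ℝ) ^ 2 * γ)‖ ^ 2 ≤
      2 * L * ((4 * L / q + 1) * (4 * q * δ + 2)) + L / δ := by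
  have hmL : (m : ℝ) ≤ L := by exact_mod_cast hm
  set near := (Finset.range m).filter fun h : ℕ =>
    |(2 * h : ℕ) * γ - round ((2 * h : ℕ) * γ)| ≤ δ
  have hcorr : ∀ h ∈ Finset.range m, ‖∑ j ∈ Finset.range (m - h), eu (((h + j : ℕ) : ℝ) ^ 2 * γ) *
      (starRingEnd ℂ) (eu ((j : ℝ) ^ 2 * γ))‖ ≤
      (if |(2 * h : ℕ) * γ - round ((2 * h : ℕ) * γ)| ≤ δ then (L : ℝ) else 0) + 1 / (2 * δ) := by
    intro h _
    have hlen : ((m - h : ℕ) : ℝ) ≤ L := by exact_mod_cast (Nat.sub_le m h).trans hm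
    rw [norm_sum_eu_sq_mul_conj]
    refine (norm_sum_range_eu_le_ite hδ (m - h) _).trans ?_
    gcongr
    split_ifs <;> simp [hlen]
  have hnear : (near.card : ℝ) ≤ (4 * L / q + 1) * (4 * q * δ + 2) := by
    have hle : near.card ≤
        ((Finset.range (2 * L)).filter fun h : ℕ => |h * γ - round (h * γ)| ≤ δ).card := by
      refine Finset.card_le_card_of_injOn (fun h => 2 * h) (fun h hh => ?_)
        (fun h _ h' _ heq => by simpa using heq)
      simp only [near, Finset.coe_filter, Finset.mem_range, Set.mem_ofPred_eq] at hh ⊢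
      exact ⟨by omega, hh.2⟩
    refine (Nat.cast_le.2 hle).trans ((card_near_int_le hq ha hγ (2 * L) hδ.le).trans_eq ?_)
    push_cast; ring
  calc ‖∑ n ∈ Finset.range m, eu ((n : ℝ) ^ 2 * γ)‖ ^ 2
      ≤ 2 * (near.card * L + m * (1 / (2 * δ))) := by
        refine (sq_norm_sum_range_le _ m).trans ?_
        have h := Finset.sum_le_sum hcorr
        rw [Finset.sum_add_distrib, ← Finset.sum_filter, Finset.sum_const, Finset.sum_const,
          Finset.card_range, nsmul_eq_mul, nsmul_eq_mul] at h
        linarith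
    _ ≤ 2 * ((4 * L / q + 1) * (4 * q * δ + 2) * L + L * (1 / (2 * δ))) := by gcongr
    _ = 2 * L * ((4 * L / q + 1) * (4 * q * δ + 2)) + L / δ := by field_simp

lemma norm_sqSum_le_of_weyl {γ δ R : ℝ} {q : ℕ} (hq : 0 < q) {a : ℤ}
    (ha : IsCoprime a (q : ℤ)) (hγ : |γ - a / q| ≤ 1 / (q : ℝ) ^ 2) (hδ : 0 < δ) (M : ℕ)
    (hR : 0 ≤ R) (hbound : 2 * ((M : ℝ) + 1) * ((4 * (M + 1) / q + 1) * (4 * q * δ + 2)) +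
      (M + 1) / δ ≤ R ^ 2) :
    ‖sqSum M γ‖ ≤ 4 * M * R := by
  have hpartial : ∀ m ≤ M + 1, ‖∑ n ∈ Finset.range m, eu ((n : ℝ) ^ 2 * γ)‖ ≤ R := fun m hm => by
    have h := sq_norm_sum_range_sq_eu_le hq ha hγ hδ hm
    push_cast at h
    exact le_of_sq_le_sq (h.trans hbound) hR
  have hstep : ∀ i : ℕ, ‖(2 * (i + 1 : ℕ) : ℂ) - 2 * (i : ℂ)‖ = 2 := fun i => by
    have h : (2 * (i + 1 : ℕ) : ℂ) - 2 * (i : ℂ) = 2 := by push_cast; ring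
    rw [h, Complex.norm_ofNat]
  refine (norm_sum_mul_le_of_partial_sums (fun n => (2 * n : ℂ)) _ M hpartial).trans_eq ?_
  rw [Finset.sum_congr rfl fun i _ => hstep i]
  simp only [norm_mul, Complex.norm_ofNat, Complex.norm_natCast, Finset.sum_const,
    Finset.card_range, nsmul_eq_mul]
  ring

end Weyl

section Arcs

/-- The indices `r ∈ [P]` of the grid frequencies `r / P` within `κ` of `x`. -/
noncomputable def arc (P : ℕ) (κ x : ℝ) : Finset ℕ := {r ∈ Finset.Icc 1 P | |(r : ℝ) / P - x| ≤ κ}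

lemma card_filter_floor_abs_sub_le (s : Finset ℕ) (y : ℝ) (t : ℕ) :
    (s.filter fun r : ℕ => ⌊|(r : ℝ) - y|⌋₊ = t).card ≤ 2 := by
  rw [← Finset.card_image_of_injective _ (Nat.cast_injective (R := ℤ))]
  refine (Finset.card_le_card (t := {⌈y⌉ + t, ⌊y⌋ - t}) fun z hz => ?_).trans Finset.card_le_two
  simp only [Finset.mem_image, Finset.mem_filter] at hz
  obtain ⟨r, ⟨-, hr⟩, rfl⟩ := hz
  rw [Nat.floor_eq_iff (abs_nonneg _)] at hr
  simp only [Finset.mem_insert, Finset.mem_singleton]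
  rcases abs_cases ((r : ℝ) - y) with ⟨habs, -⟩ | ⟨habs, -⟩ <;> rw [habs] at hr
  · left
    have hceil : ⌈y⌉ = (r : ℤ) - t := by
      rw [Int.ceil_eq_iff]; push_cast; constructor <;> linarith [hr.1, hr.2]
    omega
  · right
    have hfloor : ⌊y⌋ = (r : ℤ) + t := by
      rw [Int.floor_eq_iff]; push_cast; constructor <;> linarith [hr.1, hr.2]
    omega

lemma sum_le_two_mul_sum_floor {s : Finset ℕ} {y : ℝ} {H : ℕ} (hs : ∀ r ∈ s, |(r : ℝ) - y| ≤ H)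
    {g G : ℕ → ℝ} (hG : ∀ t, 0 ≤ G t) (hg : ∀ r ∈ s, g r ≤ G ⌊|(r : ℝ) - y|⌋₊) :
    ∑ r ∈ s, g r ≤ 2 * ∑ t ∈ Finset.range (H + 1), G t := by
  have hmaps : ∀ r ∈ s, ⌊|(r : ℝ) - y|⌋₊ ∈ Finset.range (H + 1) := fun r hr => by
    rw [Finset.mem_range, Nat.lt_succ_iff]
    exact Nat.floor_le_of_le (hs r hr)
  rw [← Finset.sum_fiberwise_of_maps_to hmaps, Finset.mul_sum]
  refine Finset.sum_le_sum fun t _ => ?_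
  calc ∑ r ∈ s.filter fun r : ℕ => ⌊|(r : ℝ) - y|⌋₊ = t, g r
      ≤ (s.filter fun r : ℕ => ⌊|(r : ℝ) - y|⌋₊ = t).card • G t := by
        refine Finset.sum_le_card_nsmul _ _ _ fun r hr => ?_
        rw [Finset.mem_filter] at hr
        exact (hg r hr.1).trans_eq (by rw [hr.2])
    _ ≤ 2 * G t := by
        rw [nsmul_eq_mul]
        gcongr
        · exact hG t
        · exact_mod_cast card_filter_floor_abs_sub_le s y t

lemma sum_le_of_le_inv_dist {s : Finset ℕ} {y : ℝ} {H : ℕ} (hs : ∀ r ∈ s, |(r : ℝ) - y| ≤ H)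
    {g : ℕ → ℝ} {W P : ℝ} (hW : 0 ≤ W) (hP : 0 ≤ P) (hgW : ∀ r ∈ s, g r ≤ W)
    (hgP : ∀ r ∈ s, 1 ≤ |(r : ℝ) - y| → g r ≤ P / (2 * |(r : ℝ) - y|)) :
    ∑ r ∈ s, g r ≤ 2 * W + P * (1 + Real.log H) := by
  have hfloor : ∀ r ∈ s, g r ≤
      (fun t : ℕ => if t = 0 then W else P / (2 * t)) ⌊|(r : ℝ) - y|⌋₊ := fun r hr => by
    dsimp only
    split_ifs with h0
    · exact hgW r hr
    · have hpos : 0 < ⌊|(r : ℝ) - y|⌋₊ := Nat.pos_of_ne_zero h0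
      have hle : (⌊|(r : ℝ) - y|⌋₊ : ℝ) ≤ |(r : ℝ) - y| := Nat.floor_le (abs_nonneg _)
      exact (hgP r hr (Nat.floor_pos.1 hpos)).trans (by gcongr)
  have hharmonic : ∑ k ∈ Finset.range H, (if k + 1 = 0 then W else P / (2 * ((k + 1 : ℕ) : ℝ))) =
      P / 2 * (harmonic H : ℝ) := by
    rw [harmonic]; push_cast; rw [Finset.mul_sum]
    refine Finset.sum_congr rfl fun k _ => ?_
    field_simp
  refine (sum_le_two_mul_sum_floor (G := fun t : ℕ => if t = 0 then W else P / (2 * t)) hs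
    (fun t => by split_ifs <;> positivity) hfloor).trans ?_
  rw [Finset.sum_range_succ', hharmonic, if_pos rfl]
  nlinarith [harmonic_le_one_add_log H]

section

variable {P H : ℕ} {κ x : ℝ}

lemma abs_natCast_sub_mul (hP : 0 < P) (r : ℕ) (x : ℝ) :
    |(r : ℝ) - x * P| = |(r : ℝ) / P - x| * P := by
  have hPR : (0 : ℝ) < P := by exact_mod_cast hP
  rw [← abs_of_pos hPR, ← abs_mul, abs_of_pos hPR, sub_mul, div_mul_cancel₀ _ hPR.ne']

lemma abs_natCast_sub_mul_le_of_mem_arc (hP : 0 < P) (hH : κ * P ≤ H) {r : ℕ}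
    (hr : r ∈ arc P κ x) : |(r : ℝ) - x * P| ≤ H := by
  rw [abs_natCast_sub_mul hP]
  exact (mul_le_mul_of_nonneg_right (Finset.mem_filter.1 hr).2 P.cast_nonneg).trans hH

lemma card_arc_le (hP : 0 < P) (hH : κ * P ≤ H) (x : ℝ) :
    ((arc P κ x).card : ℝ) ≤ 2 * (H + 1) := by
  have h := sum_le_two_mul_sum_floor (s := arc P κ x) (g := fun _ => 1) (G := fun _ => 1)
    (fun r hr => abs_natCast_sub_mul_le_of_mem_arc hP hH hr) (fun _ => zero_le_one)
    (fun _ _ => le_rfl)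
  simpa using h

lemma sum_norm_sum_range_eu_arc_le (hP : 0 < P) (hκ : κ ≤ 1 / 2) (hH : κ * P ≤ H) (x : ℝ)
    (n : ℕ) :
    ∑ r ∈ arc P κ x, ‖∑ u ∈ Finset.range n, eu (u * ((r : ℝ) / P - x))‖ ≤
      2 * n + P * (1 + Real.log H) := by
  refine sum_le_of_le_inv_dist (fun r hr => abs_natCast_sub_mul_le_of_mem_arc hP hH hr)
    n.cast_nonneg P.cast_nonneg (fun r _ => norm_sum_range_eu_le_card n _) fun r hr hdist => ?_
  have hPR : (0 : ℝ) < P := by exact_mod_cast hP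
  rw [abs_natCast_sub_mul hP] at hdist ⊢
  have hne : (r : ℝ) / P - x ≠ 0 := fun h0 => by
    rw [h0, abs_zero, zero_mul] at hdist
    linarith
  have hle := norm_sum_range_eu_le n 0 (by simpa using hne)
    (by simpa using (Finset.mem_filter.1 hr).2.trans hκ)
  rw [Int.cast_zero, sub_zero] at hle
  refine hle.trans_eq ?_
  field_simp

lemma sum_norm_sqSum_arc_le (M : ℕ) (hP : 0 < P) (x : ℚ) (hκ0 : 0 ≤ κ) (hκ : κ ≤ 1 / 2)
    (hH : κ * P ≤ H) :
    ∑ r ∈ arc P κ x, ‖sqSum M ((r : ℝ) / P)‖ ≤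
      2 / √x.den * (2 * (M * (M + 1)) + P * (1 + Real.log H)) +
        2 * (H + 1) * (100 * x.den * M * (1 + M ^ 2 * κ)) := by
  set V : ℕ → ℝ := fun r => ‖∑ u ∈ Finset.range (M * (M + 1)), eu (u * ((r : ℝ) / P - x))‖
  have hpoint : ∀ r ∈ arc P κ x, ‖sqSum M ((r : ℝ) / P)‖ ≤
      2 / √x.den * V r + 100 * x.den * M * (1 + M ^ 2 * κ) := fun r hr => by
    have hle := norm_sqSum_rat_add_le M x.pos (Rat.isCoprime_num_den x) ((r : ℝ) / P - x)
    have hfreq : (x.num : ℝ) / x.den + ((r : ℝ) / P - x) = (r : ℝ) / P := by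
      rw [← Rat.cast_def x]; ring
    rw [hfreq] at hle
    refine hle.trans ?_
    have hrκ := (Finset.mem_filter.1 hr).2
    gcongr
  have hV := sum_norm_sum_range_eu_arc_le hP hκ hH x (M * (M + 1))
  push_cast at hV
  have hcard := card_arc_le hP hH x
  refine (Finset.sum_le_sum hpoint).trans ?_
  rw [Finset.sum_add_distrib, ← Finset.mul_sum, Finset.sum_const, nsmul_eq_mul]
  gcongr

end

end Arcs

/-! ### Consequences of the absence of a density increment -/

section Tiles

lemma sum_norm_sq_sum_mul_eu {P : ℕ} (hP : 0 < P) (s : Finset ℕ) (f : ℕ → ℝ) :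
    ∑ r ∈ Finset.Icc 1 P, ‖∑ y ∈ s, (f y : ℂ) * eu (y * ((r : ℝ) / P))‖ ^ 2 =
      P * ∑ y ∈ s, ∑ z ∈ s, if (P : ℤ) ∣ (y : ℤ) - z then f y * f z else 0 := by
  apply Complex.ofReal_injective
  push_cast
  have hexpand : ∀ r ∈ Finset.Icc 1 P,
      (‖∑ y ∈ s, (f y : ℂ) * eu (y * ((r : ℝ) / P))‖ : ℂ) ^ 2 =
      ∑ y ∈ s, ∑ z ∈ s, (f y * f z : ℂ) * eu ((r : ℝ) / P * ((y - z : ℤ) : ℝ)) := by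
    intro r _
    rw [← Complex.mul_conj', map_sum, Finset.sum_mul_sum]
    refine Finset.sum_congr rfl fun y _ => Finset.sum_congr rfl fun z _ => ?_
    rw [map_mul, Complex.conj_ofReal, conj_eu, mul_mul_mul_comm, ← eu_add]
    congr 2; push_cast; ring
  rw [Finset.sum_congr rfl hexpand, Finset.sum_comm, Finset.mul_sum]
  refine Finset.sum_congr rfl fun y _ => ?_
  rw [Finset.sum_comm, Finset.mul_sum]
  refine Finset.sum_congr rfl fun z _ => ?_
  rw [← Finset.mul_sum, sum_Icc_eu_div_mul hP]
  split_ifs <;> push_cast <;> ring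

lemma norm_sum_mul_eu_add_le (s : Finset ℕ) (f : ℕ → ℂ) {L J : ℕ} (hL : 0 < L)
    (hJ : ∀ y ∈ s, y / L < J) (θ β : ℝ) :
    ‖∑ y ∈ s, f y * eu (y * (θ + β))‖ ≤
      ∑ i ∈ Finset.range J, ‖∑ y ∈ s with y / L = i, f y * eu (y * θ)‖ +
        2 * Real.pi * (L * |β|) * ∑ y ∈ s, ‖f y‖ := by
  have hmaps : ∀ y ∈ s, y / L ∈ Finset.range J := fun y hy => Finset.mem_range.2 (hJ y hy)
  have hsplit : ∑ y ∈ s, f y * eu (y * (θ + β)) =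
      ∑ i ∈ Finset.range J, eu ((i * L : ℕ) * β) * ∑ y ∈ s with y / L = i, f y * eu (y * θ) +
        ∑ y ∈ s, f y * eu (y * θ) * (eu (y * β) - eu ((y / L * L : ℕ) * β)) := by
    have htile : ∑ i ∈ Finset.range J,
        eu ((i * L : ℕ) * β) * ∑ y ∈ s with y / L = i, f y * eu (y * θ) =
        ∑ y ∈ s, eu ((y / L * L : ℕ) * β) * (f y * eu (y * θ)) := by
      rw [← Finset.sum_fiberwise_of_maps_to hmaps]
      refine Finset.sum_congr rfl fun i _ => ?_
      rw [Finset.mul_sum]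
      refine Finset.sum_congr rfl fun y hy => ?_
      rw [(Finset.mem_filter.1 hy).2]
    rw [htile, ← Finset.sum_add_distrib]
    refine Finset.sum_congr rfl fun y _ => ?_
    rw [mul_add, eu_add]; ring
  have hphase : ∀ y : ℕ, ‖eu (y * β) - eu ((y / L * L : ℕ) * β)‖ ≤
      2 * Real.pi * (L * |β|) := fun y => by
    have hdist : |(y : ℝ) - (y / L * L : ℕ)| ≤ L := by
      have hdiv : (y : ℝ) = ((y / L * L : ℕ) : ℝ) + ((y % L : ℕ) : ℝ) := by
        exact_mod_cast (Nat.div_add_mod' y L).symm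
      rw [hdiv, add_sub_cancel_left, Nat.abs_cast]
      exact_mod_cast (Nat.mod_lt y hL).le
    refine (norm_eu_sub_eu_le _ _).trans ?_
    rw [← sub_mul, abs_mul]
    gcongr
  rw [hsplit]
  refine (norm_add_le _ _).trans (add_le_add ?_ ?_)
  · exact norm_sum_le_of_le _ fun i _ => by rw [norm_mul, norm_eu, one_mul]
  · rw [Finset.mul_sum]
    refine norm_sum_le_of_le _ fun y _ => ?_
    rw [norm_mul, norm_mul, norm_eu, mul_one, mul_comm]
    gcongr
    exact hphase y

end Tiles

section DensityBound

/-- Every square-difference-free subset of `[n]` has at most `D` elements: there is no density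
increment on intervals of length `n`. -/
def SquareDiffBound (n : ℕ) (D : ℝ) : Prop :=
  ∀ A : Finset ℕ, A ⊆ Finset.Icc 1 n → NoSquareDiff A → (A.card : ℝ) ≤ D

variable {A : Finset ℕ} {n : ℕ} {D : ℝ}

lemma NoSquareDiff.card_progression_le (hA : NoSquareDiff A) (hD : SquareDiffBound n D) (s : ℕ)
    {q : ℕ} (hq : 0 < q) :
    (((Finset.range n).filter fun t => s + q ^ 2 * t ∈ A).card : ℝ) ≤ D := by
  rw [← Finset.card_image_of_injective _ (add_left_injective 1)]
  refine hD _ (fun t ht => ?_) fun a ha b hb m hm heq => ?_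
  · simp only [Finset.mem_image, Finset.mem_filter, Finset.mem_range] at ht
    obtain ⟨u, ⟨hu, -⟩, rfl⟩ := ht
    rw [Finset.mem_Icc]; omega
  · simp only [Finset.mem_image, Finset.mem_filter, Finset.mem_range] at ha hb
    obtain ⟨u, ⟨-, hu⟩, rfl⟩ := ha
    obtain ⟨v, ⟨-, hv⟩, rfl⟩ := hb
    have huv : u = v + m ^ 2 := by omega
    refine hA _ hu _ hv (q * m) (Nat.mul_pos hq hm) ?_
    rw [huv]; ring

lemma exists_eq_add_sq_mul {q n : ℕ} (hq : 0 < q) (hn : 0 < n) (x : ℕ) :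
    ∃ j < q, ∃ t < n, x = x / (q ^ 2 * n) * (q ^ 2 * n) + x % q + q * j + q ^ 2 * t := by
  set L := q ^ 2 * n
  set u := x % L
  have hmod : u % q = x % q :=
    Nat.mod_mod_of_dvd x ((dvd_pow_self q two_ne_zero).trans (Dvd.intro n rfl))
  refine ⟨u / q % q, Nat.mod_lt _ hq, u / q / q, ?_, ?_⟩
  · rw [Nat.div_div_eq_div_mul, Nat.div_lt_iff_lt_mul (by positivity)]
    calc u < L := Nat.mod_lt _ (by positivity)
      _ = n * (q * q) := by ring
  · calc x = x / L * L + (u % q + q * (u / q % q + q * (u / q / q))) := by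
          rw [Nat.mod_add_div, Nat.mod_add_div, Nat.div_add_mod']
      _ = _ := by rw [hmod]; ring

lemma NoSquareDiff.card_class_le (hA : NoSquareDiff A) (hn : 0 < n) (hD : SquareDiffBound n D)
    {q : ℕ} (hq : 0 < q) (i b : ℕ) :
    ((A.filter fun x => x / (q ^ 2 * n) = i ∧ x % q = b).card : ℝ) ≤ q * D := by
  set s : ℕ → ℕ := fun j => i * (q ^ 2 * n) + b + q * j
  have hsub : (A.filter fun x => x / (q ^ 2 * n) = i ∧ x % q = b) ⊆
      (Finset.range q).biUnion fun j =>
        ((Finset.range n).filter fun t => s j + q ^ 2 * t ∈ A).image fun t => s j + q ^ 2 * t := by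
    intro x hx
    obtain ⟨hxA, rfl, rfl⟩ := Finset.mem_filter.1 hx
    obtain ⟨j, hj, t, ht, hxeq⟩ := exists_eq_add_sq_mul hq hn x
    simp only [Finset.mem_biUnion, Finset.mem_image, Finset.mem_filter, Finset.mem_range]
    exact ⟨j, hj, t, ⟨ht, hxeq ▸ hxA⟩, hxeq.symm⟩
  calc ((A.filter fun x => x / (q ^ 2 * n) = i ∧ x % q = b).card : ℝ)
      ≤ ∑ j ∈ Finset.range q,
          (((Finset.range n).filter fun t => s j + q ^ 2 * t ∈ A).card : ℝ) := by
        exact_mod_cast (Finset.card_le_card hsub).trans <| Finset.card_biUnion_le.trans <|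
          Finset.sum_le_sum fun j _ => Finset.card_image_le
    _ ≤ ∑ _j ∈ Finset.range q, D :=
        Finset.sum_le_sum fun j _ => hA.card_progression_le hD _ hq
    _ = q * D := by rw [Finset.sum_const, Finset.card_range, nsmul_eq_mul]

lemma hatInd_one (B : Finset ℕ) : hatInd B 1 = B.card := by
  have hone : ∀ y ∈ B, eu ((y : ℝ) * 1) = 1 := fun y _ => by
    rw [mul_one]; exact_mod_cast eu_intCast (y : ℤ)
  rw [hatInd, Finset.sum_congr rfl hone, Finset.sum_const, nsmul_one]

lemma norm_hatInd_le (B : Finset ℕ) (γ : ℝ) : ‖hatInd B γ‖ ≤ B.card := by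
  simpa only [hatInd, norm_eu, Finset.sum_const, nsmul_one] using
    norm_sum_le B fun y : ℕ => eu (y * γ)

section Rational

variable {q : ℕ} {S : Finset ℚ}

lemma sum_norm_sq_hatInd_le (hq : 0 < q) (B : Finset ℕ) {E : ℝ}
    (hE : ∀ b, ((B.filter fun x => x % q = b).card : ℝ) ≤ E) :
    ∑ r ∈ Finset.Icc 1 q, ‖hatInd B ((r : ℝ) / q)‖ ^ 2 ≤ q * (B.card * E) := by
  have hPlancherel := sum_norm_sq_sum_mul_eu hq B fun _ => 1
  simp only [Complex.ofReal_one, one_mul] at hPlancherel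
  simp only [hatInd]
  rw [hPlancherel]
  gcongr
  rw [← nsmul_eq_mul, ← Finset.sum_const]
  refine Finset.sum_le_sum fun y _ => ?_
  rw [← Finset.sum_filter, Finset.sum_const, nsmul_one]
  refine le_trans (le_of_eq ?_) (hE (y % q))
  congr 2
  refine Finset.filter_congr fun z _ => ?_
  rw [← Int.modEq_iff_dvd]
  exact Int.natCast_modEq_iff

lemma mapsTo_toNat_num (hS : ∀ x ∈ S, x.den = q ∧ 0 < x ∧ x < 1) :
    Set.MapsTo (fun x : ℚ => x.num.toNat) S (Finset.Ico 1 q) := fun x hx => by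
  obtain ⟨hden, hpos, hlt⟩ := hS x hx
  have hnum_pos := Rat.num_pos.2 hpos
  have hnum_lt := Rat.num_lt_denom_iff.2 hlt
  simp only [Finset.coe_Ico, Set.mem_Ico]
  omega

lemma toNat_num_div_eq (hS : ∀ x ∈ S, x.den = q ∧ 0 < x ∧ x < 1) {x : ℚ} (hx : x ∈ S) :
    ((x.num.toNat : ℝ) / q) = x := by
  obtain ⟨rfl, hpos, -⟩ := hS x hx
  have hcast : ((x.num.toNat : ℕ) : ℝ) = (x.num : ℝ) := by
    exact_mod_cast congrArg (Int.cast : ℤ → ℝ) (Int.toNat_of_nonneg (Rat.num_pos.2 hpos).le)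
  rw [hcast, ← Rat.cast_def]

lemma injOn_toNat_num (hS : ∀ x ∈ S, x.den = q ∧ 0 < x ∧ x < 1) :
    Set.InjOn (fun x : ℚ => x.num.toNat) S := fun x hx y hy hxy => by
  have hcast : (x : ℝ) = y := by
    rw [← toNat_num_div_eq hS hx, ← toNat_num_div_eq hS hy]
    exact congrArg (fun m : ℕ => (m : ℝ) / q) hxy
  exact_mod_cast hcast

lemma card_le_of_forall_den_eq (hS : ∀ x ∈ S, x.den = q ∧ 0 < x ∧ x < 1) : S.card ≤ q :=
  (Finset.card_le_card_of_injOn _ (mapsTo_toNat_num hS) (injOn_toNat_num hS)).trans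
    (by rw [Nat.card_Ico]; omega)

lemma sum_norm_sq_hatInd_rat_le (hq : 0 < q) (hS : ∀ x ∈ S, x.den = q ∧ 0 < x ∧ x < 1)
    (B : Finset ℕ) {E : ℝ} (hE : ∀ b, ((B.filter fun x => x % q = b).card : ℝ) ≤ E) :
    ∑ x ∈ S, ‖hatInd B x‖ ^ 2 ≤ q * (B.card * E) - (B.card : ℝ) ^ 2 := by
  set F : ℕ → ℝ := fun r => ‖hatInd B ((r : ℝ) / q)‖ ^ 2
  have htop : F q = (B.card : ℝ) ^ 2 := by
    have hqR : (q : ℝ) ≠ 0 := by exact_mod_cast hq.ne'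
    simp only [F, div_self hqR, hatInd_one, Complex.norm_natCast]
  have hIcc : ∑ r ∈ Finset.Icc 1 q, F r = F q + ∑ r ∈ Finset.Ico 1 q, F r := by
    rw [← Finset.Ico_insert_right hq, Finset.sum_insert Finset.right_notMem_Ico]
  have hsum : ∑ x ∈ S, ‖hatInd B x‖ ^ 2 ≤ ∑ r ∈ Finset.Ico 1 q, F r := by
    have hF : ∀ x ∈ S, ‖hatInd B x‖ ^ 2 = F x.num.toNat := fun x hx => by
      simp only [F, toNat_num_div_eq hS hx]
    rw [Finset.sum_congr rfl hF, ← Finset.sum_image (f := F) (injOn_toNat_num hS)]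
    exact Finset.sum_le_sum_of_subset_of_nonneg
      (Finset.image_subset_iff.2 fun x hx => mapsTo_toNat_num hS hx) fun _ _ _ => sq_nonneg _
  linarith [sum_norm_sq_hatInd_le hq B hE]

/-- The part of `A` in the `i`-th interval of length `L`. -/
def tile (A : Finset ℕ) (L i : ℕ) : Finset ℕ := {y ∈ A | y / L = i}

lemma sum_card_tile {L J : ℕ} (hJ : ∀ x ∈ A, x / L < J) :
    ∑ i ∈ Finset.range J, ((tile A L i).card : ℝ) = A.card := by
  exact_mod_cast (Finset.card_eq_sum_card_fiberwise fun y hy => Finset.mem_range.2 (hJ y hy)).symm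

lemma sq_norm_hatInd_le {L J : ℕ} (hL : 0 < L) (hJ : ∀ x ∈ A, x / L < J) {γ θ κ : ℝ}
    (hγ : |γ - θ| ≤ κ) :
    ‖hatInd A γ‖ ^ 2 ≤ 2 * (J * ∑ i ∈ Finset.range J, ‖hatInd (tile A L i) θ‖ ^ 2) +
      2 * (2 * Real.pi * (L * κ) * A.card) ^ 2 := by
  have htile := norm_sum_mul_eu_add_le A (fun _ => 1) hL hJ θ (γ - θ)
  simp only [one_mul, add_sub_cancel, norm_one, Finset.sum_const, nsmul_one] at htile
  have hCS := sq_sum_le_card_mul_sum_sq (s := Finset.range J)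
    (f := fun i => ‖hatInd (tile A L i) θ‖)
  rw [Finset.card_range] at hCS
  set u := ∑ i ∈ Finset.range J, ‖hatInd (tile A L i) θ‖
  set v := 2 * Real.pi * (L * κ) * A.card
  have hle : ‖hatInd A γ‖ ≤ u + v := by
    refine htile.trans (add_le_add le_rfl ?_)
    simp only [v]
    gcongr
  calc ‖hatInd A γ‖ ^ 2 ≤ (u + v) ^ 2 := by gcongr
    _ ≤ 2 * u ^ 2 + 2 * v ^ 2 := by linarith [sq_nonneg (u - v), sq_nonneg (u + v)]
    _ ≤ _ := by gcongr

lemma NoSquareDiff.sum_sum_norm_sq_hatInd_tile_le (hA : NoSquareDiff A) (hn : 0 < n)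
    (hD : SquareDiffBound n D) {J : ℕ} (hq : 0 < q) (hJ : ∀ x ∈ A, x / (q ^ 2 * n) < J)
    (hS : ∀ x ∈ S, x.den = q ∧ 0 < x ∧ x < 1) :
    J * ∑ i ∈ Finset.range J, ∑ x ∈ S, ‖hatInd (tile A (q ^ 2 * n) i) x‖ ^ 2 ≤
      J * (q ^ 2 * D) * A.card - (A.card : ℝ) ^ 2 := by
  set B : ℕ → Finset ℕ := tile A (q ^ 2 * n)
  have hclass : ∀ i b, (((B i).filter fun x => x % q = b).card : ℝ) ≤ q * D := fun i b => by
    simp only [B, tile, Finset.filter_filter]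
    exact hA.card_class_le hn hD hq i b
  have hsum : ∑ i ∈ Finset.range J, ∑ x ∈ S, ‖hatInd (B i) x‖ ^ 2 ≤
      q ^ 2 * D * A.card - ∑ i ∈ Finset.range J, ((B i).card : ℝ) ^ 2 := by
    refine (Finset.sum_le_sum fun i _ =>
      sum_norm_sq_hatInd_rat_le hq hS (B i) (hclass i)).trans_eq ?_
    rw [Finset.sum_sub_distrib, ← sum_card_tile hJ, Finset.mul_sum]
    congr 1
    exact Finset.sum_congr rfl fun i _ => by ring
  have hCS := sq_sum_le_card_mul_sum_sq (s := Finset.range J) (f := fun i => ((B i).card : ℝ))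
  rw [Finset.card_range, sum_card_tile hJ] at hCS
  linarith [mul_le_mul_of_nonneg_left hsum (J.cast_nonneg : (0 : ℝ) ≤ J)]

-- The frequency `1`, excluded from `S`, accounts for the term `-|A|²`: it cancels the main term up
-- to the deficit left by the absence of a density increment.
lemma NoSquareDiff.sum_norm_sq_hatInd_near_le (hA : NoSquareDiff A) (hn : 0 < n)
    (hD : SquareDiffBound n D) {J : ℕ} (hq : 0 < q) (hJ : ∀ x ∈ A, x / (q ^ 2 * n) < J)
    (hS : ∀ x ∈ S, x.den = q ∧ 0 < x ∧ x < 1) (γ : ℚ → ℝ) {κ : ℝ}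
    (hγ : ∀ x ∈ S, |γ x - x| ≤ κ) :
    ∑ x ∈ S, ‖hatInd A (γ x)‖ ^ 2 ≤
      2 * (J * (q ^ 2 * D) * A.card - (A.card : ℝ) ^ 2) +
        2 * q * (2 * Real.pi * (q ^ 2 * n * κ) * A.card) ^ 2 := by
  have hL : 0 < q ^ 2 * n := by positivity
  have hcard : (S.card : ℝ) ≤ q := by exact_mod_cast card_le_of_forall_den_eq hS
  have hmain := hA.sum_sum_norm_sq_hatInd_tile_le hn hD hq hJ hS
  refine (Finset.sum_le_sum fun x hx => sq_norm_hatInd_le hL hJ (hγ x hx)).trans ?_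
  rw [Finset.sum_add_distrib, ← Finset.mul_sum, ← Finset.mul_sum, Finset.sum_comm,
    Finset.sum_const, nsmul_eq_mul]
  push_cast
  have herr := mul_le_mul_of_nonneg_right hcard
    (by positivity : 0 ≤ 2 * (2 * Real.pi * (q ^ 2 * n * κ) * A.card) ^ 2)
  linarith

end Rational

end DensityBound

/-! ### The balanced function -/

section Balanced

/-- The balanced function `a - 1_A`, where `a` is close to the density of `A`. -/
noncomputable def balanced (A : Finset ℕ) (a : ℝ) (x : ℕ) : ℝ := a - if x ∈ A then 1 else 0

/-- The Fourier transform of the balanced function on `[0, T)`. -/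
noncomputable def balHat (A : Finset ℕ) (a : ℝ) (T : ℕ) (γ : ℝ) : ℂ :=
  ∑ x ∈ Finset.range T, (balanced A a x : ℂ) * eu (x * γ)

variable {A : Finset ℕ} {a : ℝ} {T : ℕ}

lemma sum_range_ite_mem (hAT : A ⊆ Finset.range T) :
    ∑ x ∈ Finset.range T, (if x ∈ A then (1 : ℝ) else 0) = A.card := by
  rw [Finset.sum_boole, Finset.filter_mem_eq_inter, Finset.inter_eq_right.2 hAT]

lemma balHat_eq_sub (hAT : A ⊆ Finset.range T) (a γ : ℝ) :
    balHat A a T γ = a * ∑ x ∈ Finset.range T, eu (x * γ) - hatInd A γ := by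
  have hhat : hatInd A γ = ∑ x ∈ Finset.range T, if x ∈ A then eu (x * γ) else 0 := by
    rw [← Finset.sum_filter, Finset.filter_mem_eq_inter, Finset.inter_eq_right.2 hAT, hatInd]
  rw [balHat, hhat, Finset.mul_sum, ← Finset.sum_sub_distrib]
  refine Finset.sum_congr rfl fun x _ => ?_
  rw [balanced]
  split_ifs <;> push_cast <;> ring

lemma sum_balanced (hAT : A ⊆ Finset.range T) (a : ℝ) :
    ∑ x ∈ Finset.range T, balanced A a x = a * T - A.card := by
  simp only [balanced]
  rw [Finset.sum_sub_distrib, Finset.sum_const, sum_range_ite_mem hAT, nsmul_eq_mul,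
    Finset.card_range, mul_comm]

lemma sum_abs_balanced_le (hAT : A ⊆ Finset.range T) (ha : 0 ≤ a) :
    ∑ x ∈ Finset.range T, |balanced A a x| ≤ a * T + A.card := by
  have hpoint : ∀ x ∈ Finset.range T, |balanced A a x| ≤ a + if x ∈ A then 1 else 0 := by
    intro x _
    rw [balanced]
    split_ifs
    · exact abs_le.2 ⟨by linarith, by linarith⟩
    · rw [sub_zero, add_zero, abs_of_nonneg ha]
  refine (Finset.sum_le_sum hpoint).trans_eq ?_
  rw [Finset.sum_add_distrib, Finset.sum_const, sum_range_ite_mem hAT, nsmul_eq_mul,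
    Finset.card_range, mul_comm]

lemma sum_sq_balanced_le (hAT : A ⊆ Finset.range T) (ha : 0 ≤ a) :
    ∑ x ∈ Finset.range T, balanced A a x ^ 2 ≤ a ^ 2 * T + A.card := by
  have hpoint : ∀ x ∈ Finset.range T, balanced A a x ^ 2 ≤ a ^ 2 + if x ∈ A then 1 else 0 := by
    intro x _
    rw [balanced]
    split_ifs <;> nlinarith
  refine (Finset.sum_le_sum hpoint).trans_eq ?_
  rw [Finset.sum_add_distrib, Finset.sum_const, sum_range_ite_mem hAT, nsmul_eq_mul,
    Finset.card_range, mul_comm]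

lemma norm_balHat_le_of_far (hAT : A ⊆ Finset.range T) (ha : 0 ≤ a) {γ K : ℝ} (hγ0 : 0 < γ)
    (hγ1 : γ < 1) (hK0 : 1 ≤ 2 * K * γ) (hK1 : 1 ≤ 2 * K * (1 - γ)) :
    ‖balHat A a T γ‖ ≤ a * K + ‖hatInd A γ‖ := by
  rw [balHat_eq_sub hAT]
  refine (norm_sub_le _ _).trans (add_le_add_left ?_ _)
  rw [norm_mul, Complex.norm_real, Real.norm_eq_abs, abs_of_nonneg ha]
  refine mul_le_mul_of_nonneg_left ?_ ha
  rcases le_total γ (1 / 2) with h | h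
  · have habs : |γ - (0 : ℤ)| = γ := by rw [Int.cast_zero, sub_zero, abs_of_pos hγ0]
    refine (norm_sum_range_eu_le T 0 (by simpa using hγ0.ne') (habs.trans_le h)).trans ?_
    rw [habs, div_le_iff₀ (by positivity)]
    linarith
  · have habs : |γ - (1 : ℤ)| = 1 - γ := by rw [Int.cast_one, abs_of_neg (by linarith)]; ring
    refine (norm_sum_range_eu_le T 1 (by simpa using hγ1.ne)
      (habs.trans_le (by linarith))).trans ?_
    rw [habs, div_le_iff₀ (by linarith)]
    linarith

end Balanced

section Plancherel

variable {A : Finset ℕ} {a : ℝ} {P T : ℕ}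

lemma sum_norm_sq_sum_mul_eu_of_subset {s : Finset ℕ} (hs : s ⊆ Finset.range P) (f : ℕ → ℝ) :
    ∑ r ∈ Finset.Icc 1 P, ‖∑ y ∈ s, (f y : ℂ) * eu (y * ((r : ℝ) / P))‖ ^ 2 =
      P * ∑ y ∈ s, f y ^ 2 := by
  rcases Nat.eq_zero_or_pos P with rfl | hP
  · simp
  rw [sum_norm_sq_sum_mul_eu hP]
  congr 1
  refine Finset.sum_congr rfl fun y hy => ?_
  have hdiag : ∀ z ∈ s, (if (P : ℤ) ∣ (y : ℤ) - z then f y * f z else 0) =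
      if y = z then f y ^ 2 else 0 := by
    intro z hz
    have hyP := Finset.mem_range.1 (hs hy)
    have hzP := Finset.mem_range.1 (hs hz)
    by_cases hyz : y = z
    · subst hyz; simp [pow_two]
    · rw [if_neg hyz, if_neg]
      intro hdvd
      have := Int.eq_zero_of_abs_lt_dvd hdvd (by rw [abs_lt]; constructor <;> omega)
      omega
  rw [Finset.sum_congr rfl hdiag, Finset.sum_ite_eq, if_pos hy]

lemma sum_norm_sq_hatInd_eq (hA : A ⊆ Finset.range P) :
    ∑ r ∈ Finset.Icc 1 P, ‖hatInd A ((r : ℝ) / P)‖ ^ 2 = P * A.card := by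
  simpa [hatInd] using sum_norm_sq_sum_mul_eu_of_subset hA fun _ => 1

lemma sum_norm_sq_balHat_le (hTP : T ≤ P) (hA : A ⊆ Finset.range T) (ha : 0 ≤ a) :
    ∑ r ∈ Finset.Icc 1 P, ‖balHat A a T ((r : ℝ) / P)‖ ^ 2 ≤ P * (a ^ 2 * T + A.card) := by
  simp only [balHat]
  rw [sum_norm_sq_sum_mul_eu_of_subset (Finset.range_subset_range.2 hTP)]
  exact mul_le_mul_of_nonneg_left (sum_sq_balanced_le hA ha) P.cast_nonneg

end Plancherel

section SquareCount

variable {A : Finset ℕ} {a : ℝ} {T M : ℕ}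

lemma two_mul_dvd_sub_sub_iff {x y m : ℕ} (hx : x < T) (hy : y < T) (hm : m ≤ T) :
    ((2 * T : ℕ) : ℤ) ∣ (x - y - m : ℤ) ↔ x = y + m := by
  refine ⟨fun h => ?_, fun h => ?_⟩
  · have hzero : (x - y - m : ℤ) = 0 :=
      Int.eq_zero_of_abs_lt_dvd h (by rw [abs_lt]; constructor <;> push_cast <;> omega)
    omega
  · rw [h, show ((y + m : ℕ) : ℤ) - y - m = 0 by push_cast; ring]
    exact dvd_zero _

lemma balHat_mul_conj_mul_conj (A : Finset ℕ) (a : ℝ) (T M : ℕ) (γ : ℝ) :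
    balHat A a T γ * starRingEnd ℂ (hatInd A γ) * starRingEnd ℂ (sqSum M γ) =
      ∑ y ∈ A, ∑ n ∈ Finset.range (M + 1), ∑ x ∈ Finset.range T,
        (balanced A a x : ℂ) * (2 * n) * eu (γ * ((x - y - (n ^ 2 : ℕ) : ℤ) : ℝ)) := by
  rw [balHat, hatInd, sqSum, map_sum, map_sum, mul_assoc, Finset.sum_mul_sum, mul_comm,
    Finset.sum_mul]
  refine Finset.sum_congr rfl fun y _ => ?_
  rw [Finset.sum_mul]
  refine Finset.sum_congr rfl fun n _ => ?_
  rw [Finset.mul_sum]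
  refine Finset.sum_congr rfl fun x _ => ?_
  have hphase : γ * ((x - y - (n ^ 2 : ℕ) : ℤ) : ℝ) =
      -(y * γ) + -((n : ℝ) ^ 2 * γ) + x * γ := by
    push_cast; ring
  rw [hphase, eu_add, eu_add, ← conj_eu, ← conj_eu, map_mul, map_mul, map_natCast,
    Complex.conj_ofNat]
  ring

lemma sum_balHat_mul_conj_mul_conj (hT : 0 < T) (hAT : A ⊆ Finset.range T) (hM : M ^ 2 ≤ T)
    (a : ℝ) :
    ∑ r ∈ Finset.Icc 1 (2 * T), balHat A a T ((r : ℝ) / (2 * T : ℕ)) *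
      starRingEnd ℂ (hatInd A ((r : ℝ) / (2 * T : ℕ))) *
      starRingEnd ℂ (sqSum M ((r : ℝ) / (2 * T : ℕ))) =
    (((2 * T : ℕ) * ∑ y ∈ A, ∑ n ∈ Finset.range (M + 1),
      if y + n ^ 2 < T then balanced A a (y + n ^ 2) * (2 * n) else 0 : ℝ) : ℂ) := by
  simp only [balHat_mul_conj_mul_conj]
  rw [Finset.sum_comm, Complex.ofReal_mul, Complex.ofReal_sum, Finset.mul_sum]
  refine Finset.sum_congr rfl fun y hy => ?_
  rw [Finset.sum_comm, Complex.ofReal_sum, Finset.mul_sum]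
  refine Finset.sum_congr rfl fun n hn => ?_
  rw [Finset.sum_comm]
  have horth : ∀ x ∈ Finset.range T, ∑ r ∈ Finset.Icc 1 (2 * T), (balanced A a x : ℂ) * (2 * n) *
      eu ((r : ℝ) / (2 * T : ℕ) * ((x - y - (n ^ 2 : ℕ) : ℤ) : ℝ)) =
      if x = y + n ^ 2 then (2 * T : ℕ) * ((balanced A a (y + n ^ 2) : ℂ) * (2 * n)) else 0 := by
    intro x hx
    have hn2 : n ^ 2 ≤ T :=
      (Nat.pow_le_pow_left (Nat.lt_succ_iff.1 (Finset.mem_range.1 hn)) 2).trans hM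
    rw [← Finset.mul_sum, sum_Icc_eu_div_mul (by omega)]
    simp only [two_mul_dvd_sub_sub_iff (Finset.mem_range.1 hx) (Finset.mem_range.1 (hAT hy)) hn2]
    split_ifs with hxy
    · rw [hxy]; ring
    · rw [mul_zero]
  rw [Finset.sum_congr rfl horth, Finset.sum_ite_eq']
  simp only [Finset.mem_range]
  split_ifs <;> push_cast <;> simp

lemma sum_two_mul_range (M : ℕ) : ∑ n ∈ Finset.range (M + 1), (2 * n : ℝ) = M * (M + 1) := by
  induction M with
  | zero => simp
  | succ k ih => rw [Finset.sum_range_succ, ih]; push_cast; ring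

lemma NoSquareDiff.le_sum_balanced_mul (hA : NoSquareDiff A) (ha : 0 ≤ a) :
    a * (M * (M + 1)) * (A.filter fun y => y + M ^ 2 < T).card ≤
      ∑ y ∈ A, ∑ n ∈ Finset.range (M + 1),
        if y + n ^ 2 < T then balanced A a (y + n ^ 2) * (2 * n) else 0 := by
  have hterm : ∀ y ∈ A, ∀ n : ℕ,
      (if y + n ^ 2 < T then balanced A a (y + n ^ 2) * (2 * n) else 0) =
      if y + n ^ 2 < T then a * (2 * n) else 0 := by
    intro y hy n
    rcases Nat.eq_zero_or_pos n with rfl | hn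
    · simp
    · rw [balanced, if_neg (fun h => hA _ h y hy n hn rfl), sub_zero]
  calc a * (M * (M + 1)) * (A.filter fun y => y + M ^ 2 < T).card
      = ∑ y ∈ A.filter fun y => y + M ^ 2 < T, ∑ n ∈ Finset.range (M + 1), a * (2 * n) := by
        rw [Finset.sum_const, ← Finset.mul_sum, sum_two_mul_range, nsmul_eq_mul]; ring
    _ ≤ ∑ y ∈ A.filter fun y => y + M ^ 2 < T, ∑ n ∈ Finset.range (M + 1),
          if y + n ^ 2 < T then a * (2 * n) else 0 := by
        refine Finset.sum_le_sum fun y hy => Finset.sum_le_sum fun n hn => ?_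
        have hyM := (Finset.mem_filter.1 hy).2
        have hnM : n ^ 2 ≤ M ^ 2 :=
          Nat.pow_le_pow_left (Nat.lt_succ_iff.1 (Finset.mem_range.1 hn)) 2
        rw [if_pos (by omega)]
    _ ≤ ∑ y ∈ A, ∑ n ∈ Finset.range (M + 1), if y + n ^ 2 < T then a * (2 * n) else 0 := by
        refine Finset.sum_le_sum_of_subset_of_nonneg (Finset.filter_subset _ _) fun y _ _ =>
          Finset.sum_nonneg fun n _ => ?_
        split_ifs <;> positivity
    _ = _ := Finset.sum_congr rfl fun y hy => Finset.sum_congr rfl fun n _ => (hterm y hy n).symm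

lemma NoSquareDiff.le_sum_norm_mul (hA : NoSquareDiff A) (hT : 0 < T) (hAT : A ⊆ Finset.range T)
    (hM : M ^ 2 ≤ T) (ha : 0 ≤ a) :
    (2 * T : ℕ) * (a * (M * (M + 1)) * (A.filter fun y => y + M ^ 2 < T).card) ≤
      ∑ r ∈ Finset.Icc 1 (2 * T), ‖balHat A a T ((r : ℝ) / (2 * T : ℕ))‖ *
        ‖hatInd A ((r : ℝ) / (2 * T : ℕ))‖ * ‖sqSum M ((r : ℝ) / (2 * T : ℕ))‖ := by
  refine (mul_le_mul_of_nonneg_left (hA.le_sum_balanced_mul ha) (2 * T).cast_nonneg).trans ?_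
  refine (le_abs_self _).trans ?_
  rw [← Real.norm_eq_abs, ← Complex.norm_real, ← sum_balHat_mul_conj_mul_conj hT hAT hM a]
  refine norm_sum_le_of_le _ fun r _ => ?_
  rw [norm_mul, norm_mul, Complex.norm_conj, Complex.norm_conj]

end SquareCount

section NearIntegers

variable {A : Finset ℕ} {n J : ℕ}

lemma SquareDiffBound.nonneg {D : ℝ} (hD : SquareDiffBound n D) : 0 ≤ D := by
  simpa using hD ∅ (Finset.empty_subset _) fun a ha => absurd ha (Finset.notMem_empty a)

lemma NoSquareDiff.card_tile_le {D : ℝ} (hA : NoSquareDiff A) (hn : 0 < n)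
    (hD : SquareDiffBound n D) (i : ℕ) : ((tile A n i).card : ℝ) ≤ D := by
  simpa [Nat.mod_one, tile] using hA.card_class_le hn hD one_pos i 0

lemma NoSquareDiff.card_tail_le {D : ℝ} {K : ℕ} (hA : NoSquareDiff A) (hn : 0 < n)
    (hD : SquareDiffBound n D) (hAT : A ⊆ Finset.range (J * n)) :
    ((A.filter fun y => ¬ y + K < J * n).card : ℝ) ≤ (K / n + 1 : ℕ) * D := by
  have hsub : (A.filter fun y => ¬ y + K < J * n) ⊆
      (Finset.Ico (J - (K / n + 1)) J).biUnion (tile A n) := by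
    intro y hy
    obtain ⟨hyA, hyK⟩ := Finset.mem_filter.1 hy
    have hyT := Finset.mem_range.1 (hAT hyA)
    have hlast : J * n < (y / n + K / n + 2) * n := by
      nlinarith [Nat.lt_div_mul_add (a := y) hn, Nat.lt_div_mul_add (a := K) hn]
    have hJ := lt_of_mul_lt_mul_right hlast (Nat.zero_le _)
    have hyJ := (Nat.div_lt_iff_lt_mul hn).2 hyT
    exact Finset.mem_biUnion.2 ⟨y / n, Finset.mem_Ico.2
      ⟨tsub_le_iff_right.2 (by linarith), hyJ⟩, Finset.mem_filter.2 ⟨hyA, rfl⟩⟩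
  calc ((A.filter fun y => ¬ y + K < J * n).card : ℝ)
      ≤ ∑ i ∈ Finset.Ico (J - (K / n + 1)) J, ((tile A n i).card : ℝ) := by
        exact_mod_cast (Finset.card_le_card hsub).trans Finset.card_biUnion_le
    _ ≤ ∑ _i ∈ Finset.Ico (J - (K / n + 1)) J, D :=
        Finset.sum_le_sum fun i _ => hA.card_tile_le hn hD i
    _ ≤ (K / n + 1 : ℕ) * D := by
        rw [Finset.sum_const, nsmul_eq_mul, Nat.card_Ico]
        exact mul_le_mul_of_nonneg_right (Nat.cast_le.2 tsub_tsub_le) hD.nonneg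

lemma card_tile_range (hn : 0 < n) {i : ℕ} (hi : i < J) :
    (tile (Finset.range (J * n)) n i).card = n := by
  have hIco : tile (Finset.range (J * n)) n i = Finset.Ico (i * n) ((i + 1) * n) := by
    have hle : (i + 1) * n ≤ J * n := Nat.mul_le_mul_right _ hi
    ext x
    rw [add_mul, one_mul] at *
    simp only [tile, Finset.mem_filter, Finset.mem_range, Finset.mem_Ico, Nat.div_eq_iff hn]
    omega
  rw [hIco, Nat.card_Ico, add_mul, one_mul, Nat.add_sub_cancel_left]

lemma NoSquareDiff.sum_tile_balanced_nonneg {a : ℝ} (hA : NoSquareDiff A) (hn : 0 < n)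
    (hD : SquareDiffBound n (a * n)) {i : ℕ} (hi : i < J) :
    0 ≤ ∑ x ∈ tile (Finset.range (J * n)) n i, balanced A a x := by
  have hcard : (((tile (Finset.range (J * n)) n i).filter fun x => x ∈ A).card : ℝ) ≤ a * n := by
    refine (Nat.cast_le.2 (Finset.card_le_card fun x hx => ?_)).trans (hA.card_tile_le hn hD i)
    simp only [tile, Finset.mem_filter] at hx ⊢
    exact ⟨hx.2, hx.1.2⟩
  simp only [balanced]
  rw [Finset.sum_sub_distrib, Finset.sum_const, Finset.sum_boole, nsmul_eq_mul,
    card_tile_range hn hi]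
  linarith

-- No tile carries more than its share of `A`, so on each tile the balanced function has
-- nonnegative sum, and the tile sums add up without cancellation to the total deficit.
lemma NoSquareDiff.norm_balHat_near_int_le {a : ℝ} (hA : NoSquareDiff A) (hn : 0 < n)
    (ha : 0 ≤ a) (hD : SquareDiffBound n (a * n)) (hAT : A ⊆ Finset.range (J * n)) (m : ℤ)
    (γ : ℝ) :
    ‖balHat A a (J * n) γ‖ ≤ (a * (J * n : ℕ) - A.card) +
      2 * Real.pi * (n * |γ - m|) * (a * (J * n : ℕ) + A.card) := by
  have hlt : ∀ x ∈ Finset.range (J * n), x / n < J := fun x hx =>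
    (Nat.div_lt_iff_lt_mul hn).2 (Finset.mem_range.1 hx)
  have htile := norm_sum_mul_eu_add_le (Finset.range (J * n)) (fun x => (balanced A a x : ℂ)) hn
    hlt m (γ - m)
  rw [add_sub_cancel] at htile
  simp only [Complex.norm_real, Real.norm_eq_abs] at htile
  refine htile.trans (add_le_add ?_ ?_)
  · rw [← sum_balanced hAT a, ← Finset.sum_fiberwise_of_maps_to fun x hx =>
      Finset.mem_range.2 (hlt x hx)]
    refine Finset.sum_le_sum fun i hi => ?_
    have hone : ∀ x : ℕ, eu (x * m) = 1 := fun x => by exact_mod_cast eu_intCast (x * m)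
    simp only [hone, mul_one]
    rw [← Complex.ofReal_sum, Complex.norm_real, Real.norm_eq_abs]
    exact (abs_of_nonneg (hA.sum_tile_balanced_nonneg hn hD (Finset.mem_range.1 hi))).le
  · exact mul_le_mul_of_nonneg_left (sum_abs_balanced_le hAT ha) (by positivity)

end NearIntegers

/-! ### Major and minor arcs -/

section Farey

/-- The rationals in `(0, 1)` with denominator at most `K`: the centres of the major arcs. -/
noncomputable def farey (K : ℕ) : Finset ℚ :=
  ((Finset.range (K + 1) ×ˢ Finset.range (K + 1)).image fun p => (p.1 : ℚ) / p.2).filter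
    fun x => 0 < x ∧ x < 1 ∧ x.den ≤ K

lemma mem_farey {K : ℕ} {x : ℚ} : x ∈ farey K ↔ 0 < x ∧ x < 1 ∧ x.den ≤ K := by
  refine ⟨fun hx => (Finset.mem_filter.1 hx).2, fun hx => Finset.mem_filter.2 ⟨?_, hx⟩⟩
  obtain ⟨hpos, hlt, hden⟩ := hx
  have hnum : ((x.num.toNat : ℕ) : ℚ) = x.num := by
    exact_mod_cast congrArg (Int.cast : ℤ → ℚ) (Int.toNat_of_nonneg (Rat.num_pos.2 hpos).le)
  refine Finset.mem_image.2 ⟨(x.num.toNat, x.den), ?_, ?_⟩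
  · have hnum_lt := Rat.num_lt_denom_iff.2 hlt
    simp only [Finset.mem_product, Finset.mem_range]
    omega
  · simp only [hnum, Rat.num_div_den]

lemma card_farey_le (K : ℕ) : (farey K).card ≤ (K + 1) ^ 2 := by
  refine (Finset.card_filter_le _ _).trans (Finset.card_image_le.trans ?_)
  rw [Finset.card_product, Finset.card_range, pow_two]

lemma exists_rat_mem_Icc_abs_sub_le {γ : ℝ} (h0 : 0 ≤ γ) (h1 : γ ≤ 1) {n : ℕ} (hn : 0 < n) :
    ∃ x : ℚ, 0 ≤ x ∧ x ≤ 1 ∧ x.den ≤ n ∧ |γ - x| ≤ 1 / ((n + 1) * x.den) := by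
  obtain ⟨x, hx, hxn⟩ := Real.exists_rat_abs_sub_le_and_den_le γ hn
  have hden : (0 : ℝ) < x.den := by exact_mod_cast x.pos
  have hnR : (0 : ℝ) < n := by exact_mod_cast hn
  have hlt : |γ - x| * x.den < 1 := by
    refine (mul_le_mul_of_nonneg_right hx hden.le).trans_lt ?_
    rw [div_mul_eq_mul_div, one_mul, div_lt_one (by positivity)]
    nlinarith
  have hnum : (x : ℝ) * x.den = x.num := by exact_mod_cast Rat.mul_den_eq_num x
  refine ⟨x, ?_, ?_, hxn, hx⟩
  · by_contra! hneg
    have hnum_le : (x.num : ℝ) ≤ -1 := by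
      exact_mod_cast (by have := Rat.num_neg.2 hneg; omega : x.num ≤ -1)
    nlinarith [le_abs_self (γ - x)]
  · by_contra! hgt
    have hnum_ge : (x.den : ℝ) + 1 ≤ x.num := by
      have hlt' : ¬ x.num ≤ x.den := fun h => absurd (Rat.num_le_denom_iff.1 h) (not_le.2 hgt)
      exact_mod_cast (by omega : (x.den : ℤ) + 1 ≤ x.num)
    nlinarith [neg_le_abs (γ - x)]

lemma far_of_near_rat {x : ℚ} {K : ℕ} (hx : x ∈ farey K) {κ ξ : ℝ} (hκ : 2 * K * κ ≤ 1)
    (hξ : |ξ - x| ≤ κ) :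
    0 < ξ ∧ ξ < 1 ∧ 1 ≤ 2 * K * ξ ∧ 1 ≤ 2 * K * (1 - ξ) := by
  obtain ⟨hpos, hlt, hdenK⟩ := mem_farey.1 hx
  obtain ⟨hξ_ge, hξ_le⟩ := abs_le.1 hξ
  have hden : (0 : ℝ) < x.den := by exact_mod_cast x.pos
  have hdenK' : (x.den : ℝ) ≤ K := by exact_mod_cast hdenK
  have hnum : (x : ℝ) * x.den = x.num := by exact_mod_cast Rat.mul_den_eq_num x
  have hnum_ge : (1 : ℝ) ≤ x.num := by exact_mod_cast Rat.num_pos.2 hpos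
  have hnum_le : (x.num : ℝ) + 1 ≤ x.den := by exact_mod_cast Rat.num_lt_denom_iff.2 hlt
  have hx0 : (0 : ℝ) < x := by exact_mod_cast hpos
  have hx1 : (x : ℝ) < 1 := by exact_mod_cast hlt
  have hKx : 1 ≤ K * (x : ℝ) := by nlinarith
  have hKx1 : 1 ≤ K * (1 - (x : ℝ)) := by nlinarith
  have hKξ : 1 ≤ 2 * K * ξ := by nlinarith
  have hKξ1 : 1 ≤ 2 * K * (1 - ξ) := by nlinarith
  exact ⟨by by_contra! h; nlinarith, by by_contra! h; nlinarith, hKξ, hKξ1⟩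

end Farey

section MajorArcs

variable {A : Finset ℕ} {a κ : ℝ} {n J T P M K H : ℕ}

/-- The bound for the sum of `‖sqSum M γ‖` over a major arc of denominator `q`. -/
noncomputable def arcBound (M P H : ℕ) (κ : ℝ) (q : ℕ) : ℝ :=
  2 / √q * (2 * (M * (M + 1)) + P * (1 + Real.log H)) +
    2 * (H + 1) * (100 * q * M * (1 + M ^ 2 * κ))

lemma arcBound_nonneg (hκ : 0 ≤ κ) (q : ℕ) : 0 ≤ arcBound M P H κ q := by
  have := Real.log_natCast_nonneg H
  unfold arcBound
  positivity

/-- The weight of the frequency `γ` in the count of differences between `A` and the balanced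
function. -/
noncomputable def fourierWeight (A : Finset ℕ) (a : ℝ) (T : ℕ) (γ : ℝ) : ℝ :=
  ‖balHat A a T γ‖ * ‖hatInd A γ‖

lemma sum_mul_le_of_le_or_near {E : ℝ} {g s : ℕ → ℝ} (F : Finset ℚ) (hE : 0 ≤ E)
    (hg : ∀ r, 0 ≤ g r) (hs : ∀ r, 0 ≤ s r)
    (hmm : ∀ r ∈ Finset.Icc 1 P, s r ≤ E ∨ ∃ x ∈ F, |(r : ℝ) / P - x| ≤ κ) :
    ∑ r ∈ Finset.Icc 1 P, g r * s r ≤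
      E * ∑ r ∈ Finset.Icc 1 P, g r + ∑ x ∈ F, ∑ r ∈ arc P κ x, g r * s r := by
  have hgs : ∀ r, 0 ≤ g r * s r := fun r => mul_nonneg (hg r) (hs r)
  simp only [arc, Finset.sum_filter]
  rw [Finset.sum_comm, Finset.mul_sum, ← Finset.sum_add_distrib]
  refine Finset.sum_le_sum fun r hr => ?_
  have hnn : ∀ x ∈ F, (0 : ℝ) ≤ if |(r : ℝ) / P - x| ≤ κ then g r * s r else 0 := fun x _ => by
    split_ifs
    exacts [hgs r, le_rfl]
  rcases hmm r hr with hminor | ⟨x, hxF, hx⟩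
  · nlinarith [Finset.sum_nonneg hnn, mul_le_mul_of_nonneg_left hminor (hg r)]
  · have hmajor := Finset.single_le_sum hnn hxF
    rw [if_pos hx] at hmajor
    linarith [mul_nonneg hE (hg r)]

lemma sum_arc_mul_norm_sqSum_le {g : ℕ → ℝ} {b : ℝ} {x : ℚ} (hP : 0 < P) (hκ0 : 0 ≤ κ)
    (hκ : κ ≤ 1 / 2) (hH : κ * P ≤ H) (hb : 0 ≤ b) (hg : ∀ r ∈ arc P κ x, g r ≤ b) :
    ∑ r ∈ arc P κ x, g r * ‖sqSum M ((r : ℝ) / P)‖ ≤ b * arcBound M P H κ x.den :=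
  calc ∑ r ∈ arc P κ x, g r * ‖sqSum M ((r : ℝ) / P)‖
      ≤ ∑ r ∈ arc P κ x, b * ‖sqSum M ((r : ℝ) / P)‖ :=
        Finset.sum_le_sum fun r hr => mul_le_mul_of_nonneg_right (hg r hr) (norm_nonneg _)
    _ = b * ∑ r ∈ arc P κ x, ‖sqSum M ((r : ℝ) / P)‖ := by rw [Finset.mul_sum]
    _ ≤ b * arcBound M P H κ x.den :=
        mul_le_mul_of_nonneg_left (sum_norm_sqSum_arc_le M hP x hκ0 hκ hH) hb

lemma sum_fourierWeight_le (hTP : T ≤ P) (hAT : A ⊆ Finset.range T) (ha : 0 ≤ a) :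
    ∑ r ∈ Finset.Icc 1 P, fourierWeight A a T ((r : ℝ) / P) ≤
      P * (a ^ 2 * T + 2 * A.card) := by
  have hAMGM : ∀ r ∈ Finset.Icc 1 P, fourierWeight A a T ((r : ℝ) / P) ≤
      ‖balHat A a T ((r : ℝ) / P)‖ ^ 2 + ‖hatInd A ((r : ℝ) / P)‖ ^ 2 := fun r _ => by
    rw [fourierWeight]
    nlinarith [two_mul_le_add_sq ‖balHat A a T ((r : ℝ) / P)‖ ‖hatInd A ((r : ℝ) / P)‖,
      norm_nonneg (balHat A a T ((r : ℝ) / P)), norm_nonneg (hatInd A ((r : ℝ) / P))]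
  refine (Finset.sum_le_sum hAMGM).trans ?_
  rw [Finset.sum_add_distrib,
    sum_norm_sq_hatInd_eq (hAT.trans (Finset.range_subset_range.2 hTP))]
  linarith [sum_norm_sq_balHat_le hTP hAT ha]

lemma NoSquareDiff.fourierWeight_near_int_le (hA : NoSquareDiff A) (hn : 0 < n) (ha : 0 ≤ a)
    (hD : SquareDiffBound n (a * n)) (hAT : A ⊆ Finset.range (J * n)) (m : ℤ) {γ : ℝ}
    (hγ : |γ - m| ≤ κ) :
    fourierWeight A a (J * n) γ ≤ ((a * (J * n : ℕ) - A.card) +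
      2 * Real.pi * (n * κ) * (a * (J * n : ℕ) + A.card)) * A.card := by
  have hbal : ‖balHat A a (J * n) γ‖ ≤ (a * (J * n : ℕ) - A.card) +
      2 * Real.pi * (n * κ) * (a * (J * n : ℕ) + A.card) := by
    refine (hA.norm_balHat_near_int_le hn ha hD hAT m γ).trans ?_
    gcongr
  exact mul_le_mul hbal (norm_hatInd_le _ _) (norm_nonneg _) ((norm_nonneg _).trans hbal)

lemma fourierWeight_near_rat_le (hAT : A ⊆ Finset.range T) (ha : 0 ≤ a) {x : ℚ}
    (hx : x ∈ farey K) (hκ : 2 * K * κ ≤ 1) {γ : ℝ} (hγ : |γ - x| ≤ κ) :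
    fourierWeight A a T γ ≤ ‖hatInd A γ‖ ^ 2 + a * K * A.card := by
  obtain ⟨hγ0, hγ1, hKγ, hKγ1⟩ := far_of_near_rat hx hκ hγ
  calc fourierWeight A a T γ ≤ (a * K + ‖hatInd A γ‖) * ‖hatInd A γ‖ :=
        mul_le_mul_of_nonneg_right (norm_balHat_le_of_far hAT ha hγ0 hγ1 hKγ hKγ1)
          (norm_nonneg _)
    _ = ‖hatInd A γ‖ ^ 2 + a * K * ‖hatInd A γ‖ := by ring
    _ ≤ ‖hatInd A γ‖ ^ 2 + a * K * A.card := by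
        gcongr
        exact norm_hatInd_le A γ

lemma exists_forall_arc_norm_hatInd_le (A : Finset ℕ) (P : ℕ) (hκ : 0 ≤ κ) {x : ℚ} (h0 : 0 < x)
    (h1 : x ≤ 1) :
    ∃ γ ∈ Set.Ioc (0 : ℝ) 1, |γ - x| ≤ κ ∧
      ∀ r ∈ arc P κ x, ‖hatInd A ((r : ℝ) / P)‖ ≤ ‖hatInd A γ‖ := by
  rcases (arc P κ x).eq_empty_or_nonempty with hempty | hne
  · refine ⟨x, ⟨by exact_mod_cast h0, by exact_mod_cast h1⟩, by simpa using hκ, ?_⟩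
    rw [hempty]
    exact fun r hr => absurd hr (Finset.notMem_empty r)
  · obtain ⟨r, hr, hmax⟩ := Finset.exists_max_image _
      (fun r : ℕ => ‖hatInd A ((r : ℝ) / P)‖) hne
    obtain ⟨hrP, hrκ⟩ := Finset.mem_filter.1 hr
    obtain ⟨hr1, hrP⟩ := Finset.mem_Icc.1 hrP
    have hr0 : (0 : ℝ) < r := by exact_mod_cast hr1
    have hrP' : (r : ℝ) ≤ P := by exact_mod_cast hrP
    have hP : (0 : ℝ) < P := hr0.trans_le hrP'
    exact ⟨_, ⟨by positivity, (div_le_one hP).2 hrP'⟩, hrκ, hmax⟩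

lemma exists_arc_maxima (A : Finset ℕ) (P : ℕ) (hκ : 0 ≤ κ) :
    ∃ γ : ℚ → ℝ, ∀ x, 0 < x → x ≤ 1 → γ x ∈ Set.Ioc (0 : ℝ) 1 ∧ |γ x - x| ≤ κ ∧
      ∀ r ∈ arc P κ x, ‖hatInd A ((r : ℝ) / P)‖ ≤ ‖hatInd A (γ x)‖ := by
  have hex : ∀ x : ℚ, ∃ γ : ℝ, 0 < x → x ≤ 1 → γ ∈ Set.Ioc (0 : ℝ) 1 ∧ |γ - x| ≤ κ ∧
      ∀ r ∈ arc P κ x, ‖hatInd A ((r : ℝ) / P)‖ ≤ ‖hatInd A γ‖ := fun x => by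
    by_cases hx : 0 < x ∧ x ≤ 1
    · obtain ⟨γ, hγ⟩ := exists_forall_arc_norm_hatInd_le A P hκ hx.1 hx.2
      exact ⟨γ, fun _ _ => hγ⟩
    · exact ⟨0, fun h0 h1 => absurd ⟨h0, h1⟩ hx⟩
  choose γ hγ using hex
  exact ⟨γ, hγ⟩

lemma sum_fourierWeight_mul_norm_sqSum_le {E : ℝ} (hTP : T ≤ P) (hAT : A ⊆ Finset.range T)
    (ha : 0 ≤ a) (hE : 0 ≤ E)
    (hminor : ∀ γ : ℝ, 0 ≤ γ → γ ≤ 1 →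
      ‖sqSum M γ‖ ≤ E ∨ ∃ x : ℚ, 0 ≤ x ∧ x ≤ 1 ∧ x.den ≤ K ∧ |γ - x| ≤ κ) :
    ∑ r ∈ Finset.Icc 1 P, fourierWeight A a T ((r : ℝ) / P) * ‖sqSum M ((r : ℝ) / P)‖ ≤
      E * (P * (a ^ 2 * T + 2 * A.card)) +
      (∑ r ∈ arc P κ 0, fourierWeight A a T ((r : ℝ) / P) * ‖sqSum M ((r : ℝ) / P)‖ +
        ∑ r ∈ arc P κ 1, fourierWeight A a T ((r : ℝ) / P) * ‖sqSum M ((r : ℝ) / P)‖) +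
      ∑ x ∈ farey K, ∑ r ∈ arc P κ x,
        fourierWeight A a T ((r : ℝ) / P) * ‖sqSum M ((r : ℝ) / P)‖ := by
  have hmm : ∀ r ∈ Finset.Icc 1 P, ‖sqSum M ((r : ℝ) / P)‖ ≤ E ∨
      ∃ x ∈ insert 0 (insert 1 (farey K)), |(r : ℝ) / P - x| ≤ κ := fun r hr => by
    have hrP : (r : ℝ) ≤ P := by exact_mod_cast (Finset.mem_Icc.1 hr).2
    refine (hminor _ (by positivity) (div_le_one_of_le₀ hrP P.cast_nonneg)).imp_right ?_
    rintro ⟨x, hx0, hx1, hxK, hx⟩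
    refine ⟨x, ?_, hx⟩
    rw [Finset.mem_insert, Finset.mem_insert, mem_farey]
    rcases hx0.eq_or_lt with h0 | h0
    · exact Or.inl h0.symm
    · exact Or.inr (hx1.eq_or_lt.imp_right fun h1 => ⟨h0, h1, hxK⟩)
  have h1 : (1 : ℚ) ∉ farey K := fun h => lt_irrefl _ (mem_farey.1 h).2.1
  have h0 : (0 : ℚ) ∉ insert 1 (farey K) := fun h => by
    rw [Finset.mem_insert, mem_farey] at h
    exact h.elim zero_ne_one fun h => lt_irrefl _ h.1
  have hsplit := sum_mul_le_of_le_or_near (g := fun r => fourierWeight A a T ((r : ℝ) / P)) _ hE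
    (fun r => mul_nonneg (norm_nonneg _) (norm_nonneg _)) (fun r => norm_nonneg _) hmm
  rw [Finset.sum_insert h0, Finset.sum_insert h1, Rat.cast_zero, Rat.cast_one] at hsplit
  linarith [mul_le_mul_of_nonneg_left (sum_fourierWeight_le hTP hAT ha) hE]

lemma NoSquareDiff.sum_int_arc_mul_norm_sqSum_le (hA : NoSquareDiff A) (hn : 0 < n) (ha : 0 ≤ a)
    (hD : SquareDiffBound n (a * n)) (hAT : A ⊆ Finset.range (J * n)) (hP : 0 < P) (hκ0 : 0 ≤ κ)
    (hκ : κ ≤ 1 / 2) (hH : κ * P ≤ H) (m : ℤ) :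
    ∑ r ∈ arc P κ m, fourierWeight A a (J * n) ((r : ℝ) / P) * ‖sqSum M ((r : ℝ) / P)‖ ≤
      ((a * (J * n : ℕ) - A.card) + 2 * Real.pi * (n * κ) * (a * (J * n : ℕ) + A.card)) *
        A.card * arcBound M P H κ 1 := by
  have hnonneg := (mul_nonneg (norm_nonneg _) (norm_nonneg _)).trans
    (hA.fourierWeight_near_int_le hn ha hD hAT 0 (γ := 0) (by simpa using hκ0))
  have h := sum_arc_mul_norm_sqSum_le (M := M) (x := m) hP hκ0 hκ hH hnonneg fun r hr =>
    hA.fourierWeight_near_int_le hn ha hD hAT m (by simpa only [Rat.cast_intCast] using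
      (Finset.mem_filter.1 hr).2)
  rwa [Rat.cast_intCast, Rat.den_intCast] at h

lemma NoSquareDiff.card_le_sum_major_arcs {E : ℝ} (hA : NoSquareDiff A) (hn : 0 < n)
    (ha : 0 ≤ a) (hD : SquareDiffBound n (a * n)) (hAT : A ⊆ Finset.range (J * n)) (hJ : 0 < J)
    (hM : M ^ 2 ≤ J * n) (hE : 0 ≤ E) (hK : 1 ≤ K) (hκ0 : 0 ≤ κ) (hκ : 2 * K * κ ≤ 1)
    (hH : κ * (2 * (J * n) : ℕ) ≤ H)
    (hminor : ∀ γ : ℝ, 0 ≤ γ → γ ≤ 1 →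
      ‖sqSum M γ‖ ≤ E ∨ ∃ x : ℚ, 0 ≤ x ∧ x ≤ 1 ∧ x.den ≤ K ∧ |γ - x| ≤ κ) :
    ∃ γ : ℚ → ℝ, (∀ x, 0 < x → x ≤ 1 → γ x ∈ Set.Ioc (0 : ℝ) 1 ∧ |γ x - x| ≤ κ) ∧
      (2 * (J * n) : ℕ) * (a * (M * (M + 1)) * (A.filter fun y => y + M ^ 2 < J * n).card) ≤
        E * ((2 * (J * n) : ℕ) * (a ^ 2 * (J * n : ℕ) + 2 * A.card)) +
        2 * (((a * (J * n : ℕ) - A.card) + 2 * Real.pi * (n * κ) * (a * (J * n : ℕ) + A.card)) *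
          A.card * arcBound M (2 * (J * n)) H κ 1) +
        ∑ x ∈ farey K, (‖hatInd A (γ x)‖ ^ 2 + a * K * A.card) *
          arcBound M (2 * (J * n)) H κ x.den := by
  obtain ⟨γ, hγ⟩ := exists_arc_maxima A (2 * (J * n)) hκ0
  refine ⟨γ, fun x h0 h1 => ⟨(hγ x h0 h1).1, (hγ x h0 h1).2.1⟩, ?_⟩
  have hT : 0 < J * n := Nat.mul_pos hJ hn
  have hP : 0 < 2 * (J * n) := by omega
  have hκ2 : κ ≤ 1 / 2 := by
    have hKR : (1 : ℝ) ≤ K := by exact_mod_cast hK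
    nlinarith
  have hinteger := hA.sum_int_arc_mul_norm_sqSum_le (M := M) hn ha hD hAT hP hκ0 hκ2 hH
  have hzero := hinteger 0
  have hone := hinteger 1
  rw [Int.cast_zero] at hzero
  rw [Int.cast_one] at hone
  refine (hA.le_sum_norm_mul hT hAT hM ha).trans <|
    (sum_fourierWeight_mul_norm_sqSum_le (by omega) hAT ha hE hminor).trans <|
    add_le_add (add_le_add le_rfl ?_) (Finset.sum_le_sum fun x hx => ?_)
  · exact (add_le_add hzero hone).trans_eq (two_mul _).symm
  · have hx0 := (mem_farey.1 hx).1
    have hx1 := (mem_farey.1 hx).2.1.le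
    refine sum_arc_mul_norm_sqSum_le hP hκ0 hκ2 hH (by positivity) fun r hr => ?_
    refine (fourierWeight_near_rat_le hAT ha hx hκ (Finset.mem_filter.1 hr).2).trans ?_
    gcongr
    exact (hγ x hx0 hx1).2.2 r hr

end MajorArcs

/-! ### Choice of parameters -/

section Parameters

variable {N M : ℕ} {X : ℝ}

lemma le_pow_of_le_five_thirds_pow (hX : 5 / 3 ≤ X) {c : ℝ} {k : ℕ} (hc : c ≤ (5 / 3) ^ k) :
    c ≤ X ^ k :=
  hc.trans (pow_le_pow_left₀ (by norm_num) hX k)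

lemma half_le_log (hX : 5 / 3 ≤ X) : 1 / 2 ≤ Real.log X := by
  rw [Real.le_log_iff_exp_le (by linarith)]
  refine le_trans ?_ hX
  have hsq : Real.exp (1 / 2) ^ 2 = Real.exp 1 := by
    rw [← Real.exp_nat_mul]; norm_num
  nlinarith [Real.exp_one_lt_d9, Real.exp_pos (1 / 2)]

lemma natCast_ceil_le_two_mul {x : ℝ} (hx : 1 ≤ x) : (⌈x⌉₊ : ℝ) ≤ 2 * x := by
  linarith [Nat.ceil_lt_add_one (zero_le_one.trans hx)]

lemma exists_quarter_sqrt (hX : 5 / 3 ≤ X) (hN : X ^ 1000 ≤ N) :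
    ∃ M : ℕ, 16 * (M : ℝ) ^ 2 ≤ N ∧ (N : ℝ) ≤ 64 * (M : ℝ) ^ 2 ∧ X ^ 400 ≤ M := by
  have hX1 : 1 ≤ X := by linarith
  have hN16 : 16 ≤ N := by
    have h := le_pow_of_le_five_thirds_pow hX (c := 16) (k := 8) (by norm_num)
    exact_mod_cast (h.trans (pow_le_pow_right₀ hX1 (by norm_num))).trans hN
  have hsqrt : Nat.sqrt N * Nat.sqrt N ≤ N := Nat.sqrt_le N
  have hsqrt' : N < (Nat.sqrt N + 1) * (Nat.sqrt N + 1) := Nat.lt_succ_sqrt N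
  have h4 : 4 ≤ Nat.sqrt N := Nat.le_sqrt.2 hN16
  set M := Nat.sqrt N / 4
  have hlow : 4 * M ≤ Nat.sqrt N := Nat.mul_div_le _ 4
  have hupp : Nat.sqrt N + 1 ≤ 4 * M + 4 := by omega
  have hM1 : 1 ≤ M := by omega
  have h16 : 16 * M ^ 2 ≤ N := by nlinarith
  have h64 : N ≤ 64 * M ^ 2 := by nlinarith
  have h64' : (N : ℝ) ≤ 64 * (M : ℝ) ^ 2 := by exact_mod_cast h64
  refine ⟨M, by exact_mod_cast h16, h64', le_of_sq_le_sq ?_ (Nat.cast_nonneg _)⟩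
  have hX9 : 64 ≤ X ^ 9 := le_pow_of_le_five_thirds_pow hX (by norm_num)
  have h : (64 : ℝ) * (X ^ 400) ^ 2 ≤ X ^ 1000 :=
    calc (64 : ℝ) * (X ^ 400) ^ 2 ≤ X ^ 9 * (X ^ 400) ^ 2 := by gcongr
      _ = X ^ 809 := by ring
      _ ≤ X ^ 1000 := pow_le_pow_right₀ hX1 (by norm_num)
  linarith

lemma mul_pow_le_div (hX : 1 ≤ X) (hMN : 16 * (M : ℝ) ^ 2 ≤ N) (hM : X ^ 400 ≤ M) {k : ℕ}
    (hk : k + 32 ≤ 400) : M * X ^ k ≤ N / 16 / X ^ 32 := by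
  rw [le_div_iff₀ (by positivity), mul_assoc, ← pow_add]
  nlinarith [(pow_le_pow_right₀ hX hk).trans hM]

lemma norm_sum_range_eu_le_of_lt_abs (m : ℕ) {β δ : ℝ} (hδ : 0 < δ) (hβ : δ ≤ |β|)
    (hβ' : |β| ≤ 1 / 2) : ‖∑ u ∈ Finset.range m, eu (u * β)‖ ≤ 1 / (2 * δ) := by
  have h := norm_sum_range_eu_le m 0 (x := β)
    (by simpa using abs_pos.1 (hδ.trans_le hβ)) (by simpa using hβ')
  rw [Int.cast_zero, sub_zero] at h
  exact h.trans (by gcongr)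

lemma major_arc_error_le {q t : ℝ} (hX : 5 / 3 ≤ X) (hMN : 16 * (M : ℝ) ^ 2 ≤ N)
    (hM : X ^ 400 ≤ M) (hqX : q ≤ 2 * X ^ 40) (ht : q * t ≤ 1 / (M * X ^ 24)) :
    100 * q * M * (1 + M ^ 2 * t) ≤ 5 / 16 * (N / X ^ 16) := by
  have hX1 : 1 ≤ X := by linarith
  have hM1 : (1 : ℝ) ≤ M := (one_le_pow₀ hX1).trans hM
  have herr₁ : 200 * (M * X ^ 40) ≤ N / X ^ 16 / 16 :=
    calc 200 * (M * X ^ 40) ≤ X ^ 20 * (M * X ^ 40) := by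
          gcongr; exact le_pow_of_le_five_thirds_pow hX (by norm_num)
      _ = M * X ^ 60 := by ring
      _ ≤ N / 16 / X ^ 32 := mul_pow_le_div hX1 hMN hM (by norm_num)
      _ ≤ N / 16 / X ^ 16 := by gcongr; norm_num
      _ = _ := by ring
  have herr₂ : 100 * (M ^ 2 / X ^ 24) ≤ N / X ^ 16 / 4 :=
    calc 100 * ((M : ℝ) ^ 2 / X ^ 24) = 25 / 4 * (16 * M ^ 2) / (X ^ 16 * X ^ 8) := by ring
      _ ≤ 25 / 4 * N / (X ^ 16 * 25) := by
          gcongr; exact le_pow_of_le_five_thirds_pow hX (by norm_num)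
      _ = _ := by field_simp
  calc 100 * q * M * (1 + M ^ 2 * t) = 100 * M * q + 100 * M ^ 3 * (q * t) := by ring
    _ ≤ 100 * M * (2 * X ^ 40) + 100 * M ^ 3 * (1 / (M * X ^ 24)) := by gcongr
    _ = 200 * (M * X ^ 40) + 100 * (M ^ 2 / X ^ 24) := by field_simp; ring
    _ ≤ 5 / 16 * (N / X ^ 16) := by linarith

lemma norm_sqSum_le_of_far_of_near_rat (hX : 5 / 3 ≤ X) (hMN : 16 * (M : ℝ) ^ 2 ≤ N)
    (hM : X ^ 400 ≤ M) {x : ℚ} (hxX : (x.den : ℝ) ≤ 2 * X ^ 40) {γ : ℝ}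
    (hnear : x.den * |γ - x| ≤ 1 / (M * X ^ 24)) (hfar : X ^ 20 / N < |γ - x|) :
    ‖sqSum M γ‖ ≤ N / X ^ 16 := by
  have hX1 : 1 ≤ X := by linarith
  have hM1 : (1 : ℝ) ≤ M := (one_le_pow₀ hX1).trans hM
  have hN0 : (0 : ℝ) < N := by nlinarith
  have hq1 : (1 : ℝ) ≤ x.den := by exact_mod_cast x.pos
  have hX2 : 2 ≤ X ^ 24 := le_pow_of_le_five_thirds_pow hX (by norm_num)
  set β := γ - x with hβ
  have hβhalf : |β| ≤ 1 / 2 :=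
    calc |β| ≤ x.den * |β| := le_mul_of_one_le_left (abs_nonneg _) hq1
      _ ≤ 1 / (M * X ^ 24) := hnear
      _ ≤ 1 / 2 := one_div_le_one_div_of_le two_pos (by nlinarith)
  have hmain : 2 / √(x.den : ℝ) * ‖∑ u ∈ Finset.range (M * (M + 1)), eu (u * β)‖ ≤
      N / X ^ 16 / 4 :=
    calc _ ≤ 2 / 1 * (1 / (2 * (X ^ 20 / N))) := by
          gcongr
          · exact Real.one_le_sqrt.2 hq1
          · exact norm_sum_range_eu_le_of_lt_abs _ (by positivity) hfar.le hβhalf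
      _ = N / (X ^ 16 * X ^ 4) := by field_simp
      _ ≤ N / (X ^ 16 * 4) := by
          gcongr; exact le_pow_of_le_five_thirds_pow hX (by norm_num)
      _ = N / X ^ 16 / 4 := by rw [div_div]
  have herr : 100 * x.den * M * (1 + M ^ 2 * |β|) ≤ 5 / 16 * (N / X ^ 16) :=
    major_arc_error_le hX hMN hM hxX hnear
  have hmaj := norm_sqSum_rat_add_le M x.pos (Int.isCoprime_iff_gcd_eq_one.2 x.reduced) β
  rw [← Rat.cast_def, hβ, add_sub_cancel, ← hβ] at hmaj
  have hpos : (0 : ℝ) < N / X ^ 16 := by positivity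
  linarith

lemma weyl_bound_le {q : ℝ} (hX : 5 / 3 ≤ X) (hMN : 16 * (M : ℝ) ^ 2 ≤ N) (hM : X ^ 400 ≤ M)
    (hqX : X ^ 40 ≤ q) (hqM : q ≤ 2 * (M * X ^ 24)) :
    2 * ((M : ℝ) + 1) * ((4 * (M + 1) / q + 1) * (4 * q * (X ^ 32 / M) + 2)) +
      (M + 1) / (X ^ 32 / M) ≤ N / X ^ 32 := by
  have hX1 : 1 ≤ X := by linarith
  have hM1 : (1 : ℝ) ≤ M := (one_le_pow₀ hX1).trans hM
  have hq0 : 0 < q := lt_of_lt_of_le (by positivity) hqX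
  have hlast : ((M : ℝ) + 1) / (X ^ 32 / M) ≤ N / X ^ 32 / 8 :=
    calc ((M : ℝ) + 1) / (X ^ 32 / M) = (M + 1) * M / X ^ 32 := div_div_eq_mul_div _ _ _
      _ ≤ N / 8 / X ^ 32 := by gcongr; nlinarith
      _ = _ := by ring
  have hmid : 64 * ((M : ℝ) ^ 2 / q) ≤ N / X ^ 32 / 4 :=
    calc 64 * ((M : ℝ) ^ 2 / q) ≤ 64 * ((M : ℝ) ^ 2 / X ^ 40) := by gcongr
      _ = 4 * (16 * M ^ 2) / (X ^ 8 * X ^ 32) := by ring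
      _ ≤ 4 * N / (16 * X ^ 32) := by
          gcongr; exact le_pow_of_le_five_thirds_pow hX (by norm_num)
      _ = _ := by field_simp; ring
  have hsmall : 128 * (M * X ^ 32) + 16 * (q * X ^ 32) + 8 * M ≤ N / X ^ 32 / 16 :=
    calc 128 * (M * X ^ 32) + 16 * (q * X ^ 32) + 8 * M
        ≤ 128 * (M * X ^ 32) + 16 * (2 * (M * X ^ 24) * X ^ 32) + 8 * M := by gcongr
      _ = M * (128 * X ^ 32 + 32 * X ^ 56 + 8) := by ring
      _ ≤ M * (168 * X ^ 56) := by
          gcongr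
          linarith [pow_le_pow_right₀ hX1 (by norm_num : 32 ≤ 56), one_le_pow₀ hX1 (n := 56)]
      _ ≤ M * (X ^ 24 * X ^ 56) := by
          gcongr; exact le_pow_of_le_five_thirds_pow hX (by norm_num)
      _ = M * X ^ 80 := by ring
      _ ≤ N / 16 / X ^ 32 := mul_pow_le_div hX1 hMN hM (by norm_num)
      _ = _ := by ring
  calc 2 * ((M : ℝ) + 1) * ((4 * (M + 1) / q + 1) * (4 * q * (X ^ 32 / M) + 2)) +
        (M + 1) / (X ^ 32 / M)
      ≤ 2 * (2 * M) * ((4 * (2 * M) / q + 1) * (4 * q * (X ^ 32 / M) + 2)) + N / X ^ 32 / 8 := by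
        have hM2 : (M : ℝ) + 1 ≤ 2 * M := by linarith
        gcongr
    _ = 128 * (M * X ^ 32) + 16 * (q * X ^ 32) + 8 * M + 64 * (M ^ 2 / q) + N / X ^ 32 / 8 := by
        field_simp; ring
    _ ≤ N / X ^ 32 := by
        have hpos : 0 ≤ (N : ℝ) / X ^ 32 := by positivity
        linarith

lemma norm_sqSum_le_of_large_den (hX : 5 / 3 ≤ X) (hMN : 16 * (M : ℝ) ^ 2 ≤ N)
    (hM : X ^ 400 ≤ M) {x : ℚ} (hxX : X ^ 40 ≤ x.den) (hxM : (x.den : ℝ) ≤ 2 * (M * X ^ 24))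
    {γ : ℝ} (hx : |γ - x| ≤ 1 / x.den ^ 2) : ‖sqSum M γ‖ ≤ N / X ^ 16 := by
  have hX1 : 1 ≤ X := by linarith
  have hM1 : (1 : ℝ) ≤ M := (one_le_pow₀ hX1).trans hM
  have hs : √(N : ℝ) ^ 2 = N := Real.sq_sqrt N.cast_nonneg
  have h4M : 4 * (M : ℝ) ≤ √N := Real.le_sqrt_of_sq_le (by nlinarith)
  have hweyl := norm_sqSum_le_of_weyl (γ := γ) x.pos (Int.isCoprime_iff_gcd_eq_one.2 x.reduced)
    (δ := X ^ 32 / M) (by rwa [← Rat.cast_def]) (by positivity) M (R := √N / X ^ 16)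
    (by positivity) (by
      rw [div_pow, hs, ← pow_mul]
      exact weyl_bound_le hX hMN hM hxX hxM)
  calc ‖sqSum M γ‖ ≤ 4 * (M : ℝ) * (√N / X ^ 16) := hweyl
    _ ≤ √N * (√N / X ^ 16) := by gcongr
    _ = √N ^ 2 / X ^ 16 := by ring
    _ = N / X ^ 16 := by rw [hs]

lemma norm_sqSum_le_or_near_rat {K : ℕ} (hX : 5 / 3 ≤ X) (hMN : 16 * (M : ℝ) ^ 2 ≤ N)
    (hM : X ^ 400 ≤ M) (hK : X ^ 40 ≤ K) (hK' : (K : ℝ) ≤ 2 * X ^ 40) {γ : ℝ} (h0 : 0 ≤ γ)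
    (h1 : γ ≤ 1) :
    ‖sqSum M γ‖ ≤ N / X ^ 16 ∨
      ∃ x : ℚ, 0 ≤ x ∧ x ≤ 1 ∧ x.den ≤ K ∧ |γ - x| ≤ X ^ 20 / N := by
  have hX1 : 1 ≤ X := by linarith
  have hM0 : (0 : ℝ) < M := lt_of_lt_of_le (by positivity) hM
  have hMX : 1 ≤ M * X ^ 24 := one_le_mul_of_one_le_of_one_le ((one_le_pow₀ hX1).trans hM)
    (one_le_pow₀ hX1)
  obtain ⟨x, hx0, hx1, hxD, hx⟩ :=
    exists_rat_mem_Icc_abs_sub_le h0 h1 (Nat.ceil_pos.2 (zero_lt_one.trans_le hMX))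
  have hceil := Nat.le_ceil (M * X ^ 24)
  rcases le_or_gt x.den K with hxK | hxK
  · rcases le_or_gt |γ - x| (X ^ 20 / N) with hnear | hfar
    · exact Or.inr ⟨x, hx0, hx1, hxK, hnear⟩
    refine Or.inl (norm_sqSum_le_of_far_of_near_rat hX hMN hM
      ((Nat.cast_le.2 hxK).trans hK') ?_ hfar)
    calc x.den * |γ - x| ≤ x.den * (1 / ((⌈M * X ^ 24⌉₊ + 1) * x.den)) := by gcongr
      _ = 1 / (⌈M * X ^ 24⌉₊ + 1) := by field_simp
      _ ≤ 1 / (M * X ^ 24) := by gcongr; linarith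
  · have hxD' : (x.den : ℝ) ≤ ⌈M * X ^ 24⌉₊ := Nat.cast_le.2 hxD
    refine Or.inl (norm_sqSum_le_of_large_den hX hMN hM (hK.trans (Nat.cast_le.2 hxK.le))
      (hxD'.trans (natCast_ceil_le_two_mul hMX)) (hx.trans ?_))
    rw [sq]
    gcongr
    linarith

lemma mul_one_add_log_le {P H : ℕ} (hX : 5 / 3 ≤ X) (hP : (P : ℝ) ≤ 4 * N) (hH1 : 1 ≤ H)
    (hH : (H : ℝ) ≤ 5 * X ^ 20) : P * (1 + Real.log H) ≤ 104 * Real.log X * N := by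
  have hlogH : Real.log H ≤ 24 * Real.log X :=
    calc Real.log H ≤ Real.log (X ^ 24) := by
          refine Real.log_le_log (by exact_mod_cast hH1) ?_
          calc (H : ℝ) ≤ 5 * X ^ 20 := hH
            _ ≤ X ^ 4 * X ^ 20 := by
                gcongr; exact le_pow_of_le_five_thirds_pow hX (by norm_num)
            _ = X ^ 24 := by ring
      _ = 24 * Real.log X := by rw [Real.log_pow]; norm_num
  calc (P : ℝ) * (1 + Real.log H) ≤ 4 * N * (26 * Real.log X) := by
        gcongr
        linarith [half_le_log hX]
    _ = _ := by ring

lemma arcBound_error_mul_sqrt_le {H q : ℕ} (hX : 5 / 3 ≤ X) (hMN : 16 * (M : ℝ) ^ 2 ≤ N)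
    (hM : X ^ 400 ≤ M) (hH : (H : ℝ) ≤ 5 * X ^ 20) (hq : 1 ≤ q) (hqX : (q : ℝ) ≤ 2 * X ^ 40) :
    2 * ((H : ℝ) + 1) * (100 * q * M * (1 + M ^ 2 * (X ^ 20 / N))) * √q ≤ 5 * N := by
  have hX1 : 1 ≤ X := by linarith
  have hM1 : (1 : ℝ) ≤ M := (one_le_pow₀ hX1).trans hM
  have hN0 : (0 : ℝ) < N := by nlinarith
  have hsqrt : √(q : ℝ) ≤ q := by
    rw [Real.sqrt_le_left (Nat.cast_nonneg q)]
    exact le_self_pow₀ (by exact_mod_cast hq) two_ne_zero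
  have hMX : (M : ℝ) ^ 2 * (X ^ 20 / N) ≤ X ^ 20 := by
    rw [mul_div_assoc', div_le_iff₀ hN0, mul_comm]
    gcongr
    nlinarith [sq_nonneg (M : ℝ)]
  have hX20 : 1 ≤ X ^ 20 := one_le_pow₀ hX1
  calc 2 * ((H : ℝ) + 1) * (100 * q * M * (1 + M ^ 2 * (X ^ 20 / N))) * √q
      ≤ 2 * (6 * X ^ 20) * (100 * q * M * (2 * X ^ 20)) * q := by gcongr <;> linarith
    _ = 2400 * X ^ 40 * M * (q : ℝ) ^ 2 := by ring
    _ ≤ 2400 * X ^ 40 * M * (2 * X ^ 40) ^ 2 := by gcongr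
    _ = 9600 * X ^ 120 * M := by ring
    _ ≤ X ^ 20 * X ^ 120 * M := by
        gcongr; exact le_pow_of_le_five_thirds_pow hX (by norm_num)
    _ = X ^ 140 * M := by ring
    _ ≤ X ^ 400 * M := by gcongr; norm_num
    _ ≤ M * M := by gcongr
    _ ≤ 5 * N := by nlinarith

lemma arcBound_le {P H q : ℕ} (hX : 5 / 3 ≤ X) (hMN : 16 * (M : ℝ) ^ 2 ≤ N) (hM : X ^ 400 ≤ M)
    (hP : (P : ℝ) ≤ 4 * N) (hH1 : 1 ≤ H) (hH : (H : ℝ) ≤ 5 * X ^ 20) (hq : 1 ≤ q)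
    (hqX : (q : ℝ) ≤ 2 * X ^ 40) :
    arcBound M P H (X ^ 20 / N) q ≤ 220 * Real.log X * N / √q := by
  have hM1 : (1 : ℝ) ≤ M := (one_le_pow₀ (by linarith)).trans hM
  have hN0 : (0 : ℝ) < N := by nlinarith
  have hlog : N / 2 ≤ Real.log X * N := by nlinarith [half_le_log hX]
  have hsqrt : 0 < √(q : ℝ) := Real.sqrt_pos.2 (by exact_mod_cast hq)
  have hM2 : 2 * ((M : ℝ) * (M + 1)) ≤ N / 4 := by nlinarith
  rw [arcBound, le_div_iff₀ hsqrt]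
  calc _ = 2 * (2 * ((M : ℝ) * (M + 1)) + P * (1 + Real.log H)) +
        2 * ((H : ℝ) + 1) * (100 * q * M * (1 + M ^ 2 * (X ^ 20 / N))) * √q := by field_simp
    _ ≤ 2 * (N / 4 + 104 * Real.log X * N) + 5 * N :=
        add_le_add (mul_le_mul_of_nonneg_left (add_le_add hM2 (mul_one_add_log_le hX hP hH1 hH))
          two_pos.le) (arcBound_error_mul_sqrt_le hX hMN hM hH hq hqX)
    _ ≤ 220 * Real.log X * N := by linarith

end Parameters

/-! ### Fourier mass near rationals -/

section FourierMass

variable {A : Finset ℕ} {N n J M K : ℕ} {X ν a S T : ℝ}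

lemma exists_lt_mul_le_add (hn : 0 < n) (N : ℕ) : ∃ J > 0, N < J * n ∧ J * n ≤ N + n := by
  refine ⟨N / n + 1, Nat.succ_pos _, ?_, ?_⟩ <;> rw [add_mul, one_mul]
  · exact Nat.lt_div_mul_add hn
  · exact Nat.add_le_add_right (Nat.div_mul_le_self N n) n

lemma hundred_mul_le (hX : 5 / 3 ≤ X) (hnN : n * X ^ 150 ≤ 2 * ν * N) :
    100 * (n * X ^ 20) ≤ ν * N := by
  have h : 200 * (n * X ^ 20) ≤ 2 * ν * N :=
    calc 200 * (n * X ^ 20) ≤ X ^ 12 * (n * X ^ 20) := by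
          gcongr; exact le_pow_of_le_five_thirds_pow hX (by norm_num)
      _ = n * X ^ 32 := by ring
      _ ≤ n * X ^ 150 := by gcongr <;> linarith
      _ ≤ 2 * ν * N := hnN
  linarith

lemma mul_length_le (hX : 0 < X) (haX : a * X = 1 + ν / 20) (hS : S * X = N) (hS0 : 0 ≤ S)
    (hν0 : 0 ≤ ν) (hν1 : ν ≤ 1) (hT : T ≤ N + n) (hn : 100 * n ≤ ν * N) :
    a * T ≤ S * (1 + ν / 10) := by
  have ha0 : 0 ≤ a := by
    rw [eq_div_of_mul_eq hX.ne' haX]; positivity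
  calc a * T ≤ a * (N + ν * N / 100) := by gcongr; linarith
    _ = S * ((a * X) * (1 + ν / 100)) := by rw [← hS]; ring
    _ ≤ S * (1 + ν / 10) := by
        rw [haX]
        gcongr
        nlinarith

lemma NoSquareDiff.card_sub_le_card_filter (hA : NoSquareDiff A) (hn : 0 < n) (ha : 0 ≤ a)
    (hD : SquareDiffBound n (a * n)) (hAT : A ⊆ Finset.range (J * n)) (K : ℕ) :
    A.card - a * (K + n) ≤ ((A.filter fun y => y + K < J * n).card : ℝ) := by
  have htail := hA.card_tail_le hn hD (K := K) hAT
  have hsplit : ((A.filter fun y => y + K < J * n).card : ℝ) +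
      (A.filter fun y => ¬ y + K < J * n).card = A.card := by
    exact_mod_cast Finset.card_filter_add_card_filter_not _
  have hdiv : ((K / n : ℕ) : ℝ) * n ≤ K := by exact_mod_cast Nat.div_mul_le_self K n
  have hlen : ((K / n + 1 : ℕ) : ℝ) * (a * n) ≤ a * (K + n) :=
    calc ((K / n + 1 : ℕ) : ℝ) * (a * n) = a * (((K / n : ℕ) : ℝ) * n + n) := by push_cast; ring
      _ ≤ a * (K + n) := by gcongr
  linarith

lemma NoSquareDiff.main_term_le (hA : NoSquareDiff A) (hn : 0 < n) (hX : 0 < X) (hX' : 1 / X ≤ a)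
    (hD : SquareDiffBound n (a * n)) (hAT : A ⊆ Finset.range (J * n)) (hcard : A.card * X = N)
    (hJ : (N : ℝ) ≤ (J * n : ℕ)) (haT : a * (J * n : ℕ) ≤ 2 * A.card)
    (hMN : 16 * (M : ℝ) ^ 2 ≤ N) (hNM : (N : ℝ) ≤ 64 * (M : ℝ) ^ 2) (hnN : 100 * (n : ℝ) ≤ N) :
    N * (A.card : ℝ) ^ 2 / 64 ≤ (2 * (J * n) : ℕ) *
      (a * (M * (M + 1)) * (A.filter fun y => y + M ^ 2 < J * n).card) := by
  have ha : 0 ≤ a := (by positivity : 0 ≤ 1 / X).trans hX'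
  have hgood : (A.card : ℝ) / 2 ≤ (A.filter fun y => y + M ^ 2 < J * n).card := by
    have hcut := hA.card_sub_le_card_filter hn ha hD hAT (M ^ 2)
    have hlost : a * ((M ^ 2 : ℕ) + n) ≤ a * ((J * n : ℕ) * (1 / 10)) := by
      gcongr
      push_cast at hJ ⊢
      linarith
    linarith
  calc N * (A.card : ℝ) ^ 2 / 64 = 2 * N * (1 / X * (N / 64) * (A.card / 2)) := by
        rw [← hcard]; field_simp
    _ ≤ 2 * (J * n : ℕ) * (a * (M * (M + 1)) * (A.filter fun y => y + M ^ 2 < J * n).card) := by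
        gcongr
        nlinarith [Nat.cast_nonneg (α := ℝ) M]
    _ = _ := by push_cast; ring

lemma minor_arc_term_le (hX : 5 / 3 ≤ X) (hS : S * X = N) (hS0 : 0 ≤ S) (ha0 : 0 ≤ a)
    (ha1 : a ≤ 1) (hT0 : 0 ≤ T) (hT : T ≤ 2 * N) (haT : a * T ≤ 2 * S) :
    N / X ^ 16 * (2 * T * (a ^ 2 * T + 2 * S)) ≤ N * S ^ 2 / 128 := by
  have haaT : a ^ 2 * T ≤ 2 * S :=
    calc a ^ 2 * T = a * (a * T) := by ring
      _ ≤ 1 * (a * T) := by gcongr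
      _ ≤ 2 * S := by rwa [one_mul]
  have hNX : N / X ^ 16 ≤ S / 2048 := by
    rw [div_le_div_iff₀ (by positivity) (by norm_num), ← hS]
    calc S * X * 2048 ≤ S * X * X ^ 15 := by
          gcongr; exact le_pow_of_le_five_thirds_pow hX (by norm_num)
      _ = S * X ^ 16 := by ring
  calc N / X ^ 16 * (2 * T * (a ^ 2 * T + 2 * S))
      ≤ S / 2048 * (2 * (2 * N) * (2 * S + 2 * S)) := by gcongr
    _ = N * S ^ 2 / 128 := by ring

lemma integer_arc_term_le {ℓ κ W : ℝ} (hν0 : 0 ≤ ν) (hν1 : ν ≤ 1) (hνℓ : ν * ℓ ≤ 1 / 10 ^ 7)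
    (hS0 : 0 ≤ S) (haT0 : 0 ≤ a * T) (haT : a * T ≤ S * (1 + ν / 10)) (hκ0 : 0 ≤ n * κ)
    (hκ : n * κ ≤ ν / 100) (hW0 : 0 ≤ W) (hW : W ≤ 220 * ℓ * N) :
    2 * (((a * T - S) + 2 * Real.pi * (n * κ) * (a * T + S)) * S * W) ≤ N * S ^ 2 / 512 := by
  have hSν : S * ν ≤ S := mul_le_of_le_one_right hS0 hν1
  have hbal : (a * T - S) + 2 * Real.pi * (n * κ) * (a * T + S) ≤ ν * S :=
    calc (a * T - S) + 2 * Real.pi * (n * κ) * (a * T + S)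
        ≤ S * (ν / 10) + 2 * 4 * (ν / 100) * (3 * S) := by
          have hpi := Real.pi_le_four
          gcongr <;> linarith
      _ ≤ ν * S := by linarith [mul_nonneg hν0 hS0]
  calc _ ≤ 2 * (ν * S * S * (220 * ℓ * N)) := by gcongr
    _ = 440 * N * S ^ 2 * (ν * ℓ) := by ring
    _ ≤ 440 * N * S ^ 2 * (1 / 10 ^ 7) := by gcongr
    _ ≤ N * S ^ 2 / 512 := by
        have hpos : 0 ≤ N * S ^ 2 := by positivity
        linarith

lemma sum_farey_add_mul_le {g : ℚ → ℝ} {w : ℕ → ℝ} {b c : ℝ} (hg : ∀ x, 0 ≤ g x) (hb : 0 ≤ b)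
    (hc : 0 ≤ c) (hw : ∀ q : ℕ, 1 ≤ q → q ≤ K → w q ≤ c / √q) :
    ∑ x ∈ farey K, (g x + b) * w x.den ≤
      c * ∑ x ∈ farey K, g x / √x.den + (K + 1) ^ 2 * (b * c) := by
  have hterm : ∀ x ∈ farey K, (g x + b) * w x.den ≤ c * (g x / √x.den) + b * c := fun x hx => by
    have hsqrt : 1 ≤ √(x.den : ℝ) := Real.one_le_sqrt.2 (by exact_mod_cast x.pos)
    calc (g x + b) * w x.den ≤ (g x + b) * (c / √x.den) :=
          mul_le_mul_of_nonneg_left (hw _ x.pos (mem_farey.1 hx).2.2) (add_nonneg (hg x) hb)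
      _ = c * (g x / √x.den) + b * c / √x.den := by ring
      _ ≤ c * (g x / √x.den) + b * c := by
          gcongr; exact div_le_self (mul_nonneg hb hc) hsqrt
  have hcard : ((farey K).card : ℝ) ≤ (K + 1) ^ 2 := by exact_mod_cast card_farey_le K
  refine (Finset.sum_le_sum hterm).trans ?_
  rw [Finset.sum_add_distrib, ← Finset.mul_sum, Finset.sum_const, nsmul_eq_mul]
  gcongr

lemma rational_arc_error_le {ℓ : ℝ} (hX : 5 / 3 ≤ X) (hℓ0 : 0 ≤ ℓ) (hℓ : ℓ ≤ X) (ha0 : 0 ≤ a)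
    (ha1 : a ≤ 1) (hS : S * X = N) (hN : X ^ 1000 ≤ N) (hK : (K : ℝ) ≤ 2 * X ^ 40) :
    ((K : ℝ) + 1) ^ 2 * (a * K * S * (220 * ℓ * N)) ≤ N * S ^ 2 / 512 := by
  have hX1 : 1 ≤ X := by linarith
  have hX0 : 0 < X := by linarith
  have hXS : X ^ 999 ≤ S := le_of_mul_le_mul_right (by rwa [hS, ← pow_succ]) hX0
  have hS0 : 0 ≤ S := (by positivity : 0 ≤ X ^ 999).trans hXS
  have hX40 : 1 ≤ X ^ 40 := one_le_pow₀ hX1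
  calc ((K : ℝ) + 1) ^ 2 * (a * K * S * (220 * ℓ * N))
      ≤ (3 * X ^ 40) ^ 2 * (1 * (2 * X ^ 40) * S * (220 * X * N)) := by gcongr; linarith
    _ = N * S * (2027520 * X ^ 121) / 512 := by ring
    _ ≤ N * S * (X ^ 50 * X ^ 121) / 512 := by
        gcongr; exact le_pow_of_le_five_thirds_pow hX (by norm_num)
    _ = N * S * X ^ 171 / 512 := by ring
    _ ≤ N * S * X ^ 999 / 512 := by gcongr; norm_num
    _ ≤ N * S * S / 512 := by gcongr
    _ = N * S ^ 2 / 512 := by ring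

lemma two_mul_mul_div_le_one (hX : 5 / 3 ≤ X) (hN : X ^ 1000 ≤ N) (hK : (K : ℝ) ≤ 2 * X ^ 40) :
    2 * K * (X ^ 20 / N) ≤ 1 := by
  have hX1 : 1 ≤ X := by linarith
  have hN0 : (0 : ℝ) < N := lt_of_lt_of_le (by positivity) hN
  rw [mul_div_assoc', div_le_one hN0]
  calc 2 * K * X ^ 20 ≤ 2 * (2 * X ^ 40) * X ^ 20 := by gcongr
    _ = 4 * X ^ 60 := by ring
    _ ≤ X ^ 4 * X ^ 60 := by gcongr; exact le_pow_of_le_five_thirds_pow hX (by norm_num)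
    _ = X ^ 64 := by ring
    _ ≤ X ^ 1000 := pow_le_pow_right₀ hX1 (by norm_num)
    _ ≤ N := hN

lemma NoSquareDiff.main_term_le_sum_farey (hA : NoSquareDiff A) (hX : 5 / 3 ≤ X)
    (hN : X ^ 1000 ≤ N) (hn : 0 < n) (ha : 0 ≤ a) (hD : SquareDiffBound n (a * n))
    (hAT : A ⊆ Finset.range (J * n)) (hJ : 0 < J) (hNJ : N ≤ J * n)
    (hJN : ((J * n : ℕ) : ℝ) ≤ 2 * N) (hMN : 16 * (M : ℝ) ^ 2 ≤ N) (hM : X ^ 400 ≤ M)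
    (hK : X ^ 40 ≤ K) (hK' : (K : ℝ) ≤ 2 * X ^ 40) :
    ∃ γ : ℚ → ℝ, ∃ w : ℕ → ℝ,
      (∀ x, 0 < x → x ≤ 1 → γ x ∈ Set.Ioc (0 : ℝ) 1 ∧ |γ x - x| ≤ X ^ 20 / N) ∧
      (∀ q : ℕ, 1 ≤ q → q ≤ K → w q ≤ 220 * Real.log X * N / √q) ∧ 0 ≤ w 1 ∧
      (2 * (J * n) : ℕ) * (a * (M * (M + 1)) * (A.filter fun y => y + M ^ 2 < J * n).card) ≤
        N / X ^ 16 * (2 * (J * n : ℕ) * (a ^ 2 * (J * n : ℕ) + 2 * A.card)) +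
        2 * (((a * (J * n : ℕ) - A.card) + 2 * Real.pi * (n * (X ^ 20 / N)) *
          (a * (J * n : ℕ) + A.card)) * A.card * w 1) +
        ∑ x ∈ farey K, (‖hatInd A (γ x)‖ ^ 2 + a * K * A.card) * w x.den := by
  have hX1 : 1 ≤ X := by linarith
  have hK1 : (1 : ℝ) ≤ K := (one_le_pow₀ hX1).trans hK
  have hN0 : (0 : ℝ) < N := lt_of_lt_of_le (by positivity) hN
  have hX20 : 1 ≤ X ^ 20 := one_le_pow₀ hX1
  have hP4 : ((2 * (J * n) : ℕ) : ℝ) ≤ 4 * N := by rw [Nat.cast_mul]; push_cast at hJN ⊢; linarith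
  have hMT : M ^ 2 ≤ J * n := by
    refine le_trans ?_ hNJ
    have h : (M : ℝ) ^ 2 ≤ N := by linarith [sq_nonneg (M : ℝ)]
    exact_mod_cast h
  set H := ⌈4 * X ^ 20⌉₊
  have hH : (H : ℝ) ≤ 5 * X ^ 20 := by
    linarith [(Nat.ceil_lt_add_one (by positivity : 0 ≤ 4 * X ^ 20)).le]
  have hκH : X ^ 20 / N * (2 * (J * n) : ℕ) ≤ H := by
    refine le_trans ?_ (Nat.le_ceil _)
    rw [div_mul_eq_mul_div, div_le_iff₀ hN0]
    linarith [mul_le_mul_of_nonneg_left hP4 (by positivity : 0 ≤ X ^ 20)]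
  obtain ⟨γ, hγ, hmain⟩ := hA.card_le_sum_major_arcs hn ha hD hAT hJ hMT (E := N / X ^ 16)
    (by positivity) (by exact_mod_cast hK1) (by positivity)
    (two_mul_mul_div_le_one hX hN hK') hκH
    fun γ h0 h1 => norm_sqSum_le_or_near_rat hX hMN hM hK hK' h0 h1
  refine ⟨γ, arcBound M (2 * (J * n)) H (X ^ 20 / N), hγ, fun q hq hqK => ?_, ?_, ?_⟩
  · exact arcBound_le hX hMN hM hP4 (Nat.ceil_pos.2 (by positivity)) hH hq
      (le_trans (by exact_mod_cast hqK) hK')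
  · exact arcBound_nonneg (by positivity) 1
  · simpa only [Nat.cast_mul, Nat.cast_ofNat] using hmain

lemma NoSquareDiff.sq_card_le_sum_div_sqrt (hA : NoSquareDiff A) (hX : 5 / 3 ≤ X)
    (hAN : A ⊆ Finset.Icc 1 N) (hcard : A.card * X = N) (hN : X ^ 1000 ≤ N) (hν0 : 0 < ν)
    (hν : ν * Real.log X ≤ 1 / 10 ^ 7) (hn : 0 < n) (hnN : n * X ^ 150 ≤ 2 * ν * N)
    (haX : a * X = 1 + ν / 20) (hD : SquareDiffBound n (a * n)) (hK : X ^ 40 ≤ K)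
    (hK' : (K : ℝ) ≤ 2 * X ^ 40) :
    ∃ γ : ℚ → ℝ, (∀ x, 0 < x → x ≤ 1 → γ x ∈ Set.Ioc (0 : ℝ) 1 ∧ |γ x - x| ≤ X ^ 20 / N) ∧
      (A.card : ℝ) ^ 2 ≤
        56320 * Real.log X * ∑ x ∈ farey K, ‖hatInd A (γ x)‖ ^ 2 / √x.den := by
  have hX0 : 0 < X := by linarith
  have hN0 : (0 : ℝ) < N := lt_of_lt_of_le (by positivity) hN
  have hℓ := half_le_log hX
  have hν1 : ν ≤ 1 := by nlinarith
  have ha : a = (1 + ν / 20) / X := eq_div_of_mul_eq hX0.ne' haX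
  have ha0 : 0 ≤ a := by rw [ha]; positivity
  have ha1 : a ≤ 1 := by rw [ha, div_le_one hX0]; linarith
  have hXa : 1 / X ≤ a := by rw [ha]; gcongr; linarith
  have hnX := hundred_mul_le hX hnN
  have hnν : 100 * (n : ℝ) ≤ ν * N := by
    linarith [le_mul_of_one_le_right n.cast_nonneg (one_le_pow₀ (by linarith : 1 ≤ X) (n := 20))]
  have hnN' : 100 * (n : ℝ) ≤ N := hnν.trans (mul_le_of_le_one_left hN0.le hν1)
  obtain ⟨M, hMN, hNM, hM⟩ := exists_quarter_sqrt hX hN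
  obtain ⟨J, hJ0, hNJ, hJN⟩ := exists_lt_mul_le_add hn N
  have hNT : (N : ℝ) ≤ (J * n : ℕ) := by exact_mod_cast hNJ.le
  have hTN : ((J * n : ℕ) : ℝ) ≤ N + n := by exact_mod_cast hJN
  have hTN' : ((J * n : ℕ) : ℝ) ≤ 2 * N := by linarith
  have haT := mul_length_le hX0 haX hcard A.card.cast_nonneg hν0.le hν1 hTN hnν
  have haT' : a * (J * n : ℕ) ≤ 2 * A.card := haT.trans (by
    nlinarith [mul_le_of_le_one_right (A.card.cast_nonneg (α := ℝ)) hν1])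
  have hAT : A ⊆ Finset.range (J * n) := fun x hx =>
    Finset.mem_range.2 ((Finset.mem_Icc.1 (hAN hx)).2.trans_lt hNJ)
  obtain ⟨γ, w, hγ, hw, hw0, hsum⟩ := hA.main_term_le_sum_farey hX hN hn ha0 hD hAT hJ0 hNJ.le
    hTN' hMN hM hK hK'
  refine ⟨γ, hγ, le_of_mul_le_mul_left ?_ hN0⟩
  have hmain := hA.main_term_le hn hX0 hXa hD hAT hcard hNT haT' hMN hNM hnN'
  have hminor := minor_arc_term_le hX hcard A.card.cast_nonneg ha0 ha1 (Nat.cast_nonneg _) hTN' haT'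
  have hinteger := integer_arc_term_le hν0.le hν1 hν A.card.cast_nonneg (by positivity) haT
    (n := n) (κ := X ^ 20 / N) (by positivity)
    (by rw [mul_div_assoc', div_le_iff₀ hN0]; linarith) hw0
    (by simpa using hw 1 le_rfl (by exact_mod_cast (one_le_pow₀ (by linarith)).trans hK))
  have hrat := sum_farey_add_mul_le (K := K) (g := fun x => ‖hatInd A (γ x)‖ ^ 2)
    (b := a * K * A.card) (fun x => sq_nonneg _) (by positivity) (by positivity) hw
  have herr := rational_arc_error_le hX (by linarith) (Real.log_le_self hX0.le) ha0 ha1 hcard hN hK'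
  linarith

end FourierMass

/-! ### Extracting a popular scale -/

section DyadicScale

lemma lt_two_pow_log_floor_div_succ_mul {S y : ℝ} (hy : 0 < y) :
    S < 2 ^ (Nat.log 2 ⌊S / y⌋₊ + 1) * y := by
  rw [← div_lt_iff₀ hy]
  have h := (Nat.floor_lt' (by positivity)).1 (Nat.lt_pow_succ_log_self one_lt_two ⌊S / y⌋₊)
  exact_mod_cast h

lemma two_pow_log_floor_div_succ_mul_le {S y : ℝ} (hy : 0 < y) (hyS : y ≤ S) :
    2 ^ (Nat.log 2 ⌊S / y⌋₊ + 1) * y ≤ 2 * S := by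
  have hfloor : 1 ≤ ⌊S / y⌋₊ := (Nat.one_le_floor_iff _).2 ((one_le_div hy).2 hyS)
  have hlog : (2 : ℝ) ^ Nat.log 2 ⌊S / y⌋₊ ≤ ⌊S / y⌋₊ := by
    exact_mod_cast Nat.pow_log_le_self 2 (by omega)
  have hS := hlog.trans (Nat.floor_le (div_nonneg (hy.le.trans hyS) hy.le))
  rw [le_div_iff₀ hy] at hS
  rw [pow_succ]
  linarith

lemma sqrt_two_pow_log_succ_le {q : ℕ} (hq : 0 < q) :
    √((2 : ℝ) ^ (Nat.log 2 q + 1)) ≤ 2 * √q := by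
  have hlog : (2 : ℝ) ^ Nat.log 2 q ≤ q := by exact_mod_cast Nat.pow_log_le_self 2 hq.ne'
  rw [Real.sqrt_le_left (by positivity), mul_pow, Real.sq_sqrt q.cast_nonneg, pow_succ]
  linarith

lemma sq_div_sqrt_mul_dyadic_le {S y : ℝ} {q : ℕ} (hy : 0 < y) (hyS : y ≤ S) (hq : 0 < q) :
    y ^ 2 / √q * (2 ^ (Nat.log 2 ⌊S / y⌋₊ + 1) * √(2 ^ (Nat.log 2 q + 1) : ℝ)) ≤ 4 * S * y := by
  have hS : 0 ≤ S := hy.le.trans hyS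
  calc y ^ 2 / √q * (2 ^ (Nat.log 2 ⌊S / y⌋₊ + 1) * √(2 ^ (Nat.log 2 q + 1) : ℝ))
      = y * (2 ^ (Nat.log 2 ⌊S / y⌋₊ + 1) * y) * √((2 : ℝ) ^ (Nat.log 2 q + 1)) / √q := by ring
    _ ≤ y * (2 * S) * (2 * √q) / √q := by
        have hscale := two_pow_log_floor_div_succ_mul_le hy hyS
        have hsqrt' := sqrt_two_pow_log_succ_le hq
        gcongr ?_ / _
        exact mul_le_mul (mul_le_mul_of_nonneg_left hscale hy.le) hsqrt' (by positivity)
          (by positivity)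
    _ = 4 * S * y := by field_simp; ring

lemma exists_dyadic_scale {ι : Type*} (F : Finset ι) (f : ι → ℝ) (d : ι → ℕ) {S : ℝ} {K L : ℕ}
    (hf0 : ∀ x ∈ F, 0 < f x) (hfS : ∀ x ∈ F, f x ≤ S) (hfL : ∀ x ∈ F, S ≤ L * f x)
    (hd : ∀ x ∈ F, 0 < d x) (hK : ∀ x ∈ F, d x ≤ K) :
    ∃ i ≤ Nat.log 2 L, ∃ j ≤ Nat.log 2 K, ∃ G ⊆ F,
      (∀ x ∈ G, d x ≤ 2 ^ (j + 1) ∧ S < 2 ^ (i + 1) * f x) ∧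
      (∑ x ∈ F, f x ^ 2 / √(d x)) * (2 ^ (i + 1) * √(2 ^ (j + 1) : ℝ)) ≤
        4 * S * ((Nat.log 2 K + 1) * (Nat.log 2 L + 1)) * ∑ x ∈ G, f x := by
  classical
  set t := Finset.range (Nat.log 2 K + 1) ×ˢ Finset.range (Nat.log 2 L + 1) with ht
  set scale : ι → ℕ × ℕ := fun x => (Nat.log 2 (d x), Nat.log 2 ⌊S / f x⌋₊) with hscale
  have hmaps : ∀ x ∈ F, scale x ∈ t := fun x hx => by
    simp only [hscale, ht, Finset.mem_product, Finset.mem_range, Nat.lt_succ_iff]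
    refine ⟨Nat.log_mono_right (hK x hx), Nat.log_mono_right (Nat.floor_le_of_le ?_)⟩
    exact (div_le_iff₀ (hf0 x hx)).2 (hfL x hx)
  have htcard : (t.card : ℝ) = (Nat.log 2 K + 1) * (Nat.log 2 L + 1) := by
    rw [ht, Finset.card_product, Finset.card_range, Finset.card_range]; push_cast; ring
  have htpos : (0 : ℝ) < t.card := by rw [htcard]; positivity
  obtain ⟨⟨j, i⟩, hji, hsum⟩ := Finset.exists_le_sum_fiber_of_maps_to_of_nsmul_le_sum
    (w := fun x => f x ^ 2 / √(d x)) (b := (∑ x ∈ F, f x ^ 2 / √(d x)) / t.card) hmaps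
    (Finset.card_pos.1 (by exact_mod_cast htpos))
    (by rw [nsmul_eq_mul, mul_div_cancel₀ _ htpos.ne'])
  rw [div_le_iff₀ htpos, htcard] at hsum
  simp only [ht, Finset.mem_product, Finset.mem_range, Nat.lt_succ_iff] at hji
  have hG : ∀ x ∈ F.filter (fun x => scale x = (j, i)),
      x ∈ F ∧ Nat.log 2 (d x) = j ∧ Nat.log 2 ⌊S / f x⌋₊ = i := fun x hx => by
    rwa [Finset.mem_filter, Prod.ext_iff] at hx
  refine ⟨i, hji.2, j, hji.1, F.filter fun x => scale x = (j, i), Finset.filter_subset _ _,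
    fun x hx => ?_, ?_⟩
  · obtain ⟨hxF, rfl, rfl⟩ := hG x hx
    exact ⟨(Nat.lt_pow_succ_log_self one_lt_two _).le,
      lt_two_pow_log_floor_div_succ_mul (hf0 x hxF)⟩
  · refine (mul_le_mul_of_nonneg_right hsum (by positivity)).trans ?_
    rw [mul_right_comm, Finset.sum_mul, mul_right_comm _ _ (∑ x ∈ _, f x), Finset.mul_sum]
    refine mul_le_mul_of_nonneg_right (Finset.sum_le_sum fun x hx => ?_) (by positivity)
    obtain ⟨hxF, rfl, rfl⟩ := hG x hx
    exact sq_div_sqrt_mul_dyadic_le (hf0 x hxF) (hfS x hxF) (hd x hxF)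

lemma two_pow_succ_le_of_le_log {m i : ℕ} {c : ℝ} (hm : m ≠ 0) (hmc : m ≤ c)
    (hi : i ≤ Nat.log 2 m) : (2 : ℝ) ^ (i + 1) ≤ 2 * c := by
  have h : (2 : ℝ) ^ i ≤ m := by exact_mod_cast Nat.pow_le_of_le_log hm hi
  rw [pow_succ]
  linarith

lemma natLog_two_add_one_le {n k : ℕ} {X : ℝ} (hX : 5 / 3 ≤ X) (hn0 : n ≠ 0)
    (hn : n ≤ 2 * X ^ k) : (Nat.log 2 n : ℝ) + 1 ≤ (2 * k + 4) * Real.log X := by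
  have hℓ := half_le_log hX
  have hlog : (Nat.log 2 n : ℝ) * Real.log 2 ≤ Real.log n := by
    rw [← Real.log_pow]
    exact Real.log_le_log (by positivity) (by exact_mod_cast Nat.pow_log_le_self 2 hn0)
  have hlogn : Real.log n ≤ Real.log 2 + k * Real.log X := by
    rw [← Real.log_pow, ← Real.log_mul two_ne_zero (pow_ne_zero _ (by linarith))]
    exact Real.log_le_log (by exact_mod_cast Nat.pos_of_ne_zero hn0) hn
  have hlog2 := Real.log_two_gt_d9
  have hk : 0 ≤ k * Real.log X := by positivity
  nlinarith

lemma sum_filter_small_le {X S : ℝ} {K L : ℕ} (hX : 0 < X) (hL : X ^ 60 ≤ L) {F : Finset ℚ}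
    (hF : F.card ≤ (K + 1) ^ 2) {f : ℚ → ℝ} (hf : ∀ x ∈ F, 0 ≤ f x) :
    ∑ x ∈ F.filter (fun x => ¬ S ≤ L * f x), f x ^ 2 / √x.den ≤
      (K + 1) ^ 2 * (S ^ 2 / X ^ 120) := by
  have hterm : ∀ x ∈ F.filter (fun x => ¬ S ≤ L * f x), f x ^ 2 / √x.den ≤ S ^ 2 / X ^ 120 :=
    fun x hx => by
      obtain ⟨hxF, hxS⟩ := Finset.mem_filter.1 hx
      have hsqrt : 1 ≤ √(x.den : ℝ) := Real.one_le_sqrt.2 (by exact_mod_cast x.pos)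
      have hfx : f x ≤ S / X ^ 60 := by
        rw [le_div_iff₀' (by positivity)]
        exact (mul_le_mul_of_nonneg_right hL (hf x hxF)).trans (not_le.1 hxS).le
      calc f x ^ 2 / √x.den ≤ f x ^ 2 := div_le_self (sq_nonneg _) hsqrt
        _ ≤ (S / X ^ 60) ^ 2 := pow_le_pow_left₀ (hf x hxF) hfx 2
        _ = S ^ 2 / X ^ 120 := by rw [div_pow, ← pow_mul]
  refine (Finset.sum_le_card_nsmul _ _ _ hterm).trans ?_
  rw [nsmul_eq_mul]
  gcongr
  exact_mod_cast (Finset.card_filter_le _ _).trans hF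

lemma sq_le_mul_sum_filter_large {X S : ℝ} {K L : ℕ} (hX : 5 / 3 ≤ X) (hK : (K : ℝ) ≤ 2 * X ^ 40)
    (hL : X ^ 60 ≤ L) {F : Finset ℚ} (hF : F.card ≤ (K + 1) ^ 2) {f : ℚ → ℝ}
    (hf : ∀ x ∈ F, 0 ≤ f x) (h : S ^ 2 ≤ 56320 * Real.log X * ∑ x ∈ F, f x ^ 2 / √x.den) :
    S ^ 2 ≤ 112640 * Real.log X * ∑ x ∈ F.filter (fun x => S ≤ L * f x), f x ^ 2 / √x.den := by
  have hX0 : 0 < X := by linarith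
  have hX40 : 1 ≤ X ^ 40 := one_le_pow₀ (by linarith)
  have hℓ := half_le_log hX
  have hℓX : 1013760 * Real.log X ≤ X ^ 40 :=
    calc 1013760 * Real.log X ≤ X ^ 39 * X := by
          gcongr
          · exact le_pow_of_le_five_thirds_pow hX (by norm_num)
          · exact Real.log_le_self hX0.le
      _ = X ^ 40 := by ring
  have hsmall : ∑ x ∈ F.filter (fun x => ¬ S ≤ L * f x), f x ^ 2 / √x.den ≤ 9 * S ^ 2 / X ^ 40 :=
    calc _ ≤ ((K : ℝ) + 1) ^ 2 * (S ^ 2 / X ^ 120) := sum_filter_small_le hX0 hL hF hf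
      _ ≤ (3 * X ^ 40) ^ 2 * (S ^ 2 / X ^ 120) := by gcongr; linarith
      _ = 9 * S ^ 2 / X ^ 40 := by field_simp; ring
  have hloss : 56320 * Real.log X * (9 * S ^ 2 / X ^ 40) ≤ S ^ 2 / 2 := by
    rw [← mul_div_assoc, div_le_iff₀ (by positivity)]
    linarith [mul_le_mul_of_nonneg_left hℓX (sq_nonneg S)]
  rw [← Finset.sum_filter_add_sum_filter_not F (fun x => S ≤ L * f x), mul_add] at h
  linarith [mul_le_mul_of_nonneg_left hsmall (by positivity : 0 ≤ 56320 * Real.log X)]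

end DyadicScale

/-! ### Large Fourier coefficients -/

section LargeFourier

variable {A : Finset ℕ} {N n q : ℕ} {X ν a S : ℝ}

lemma thousand_mul_sq_mul_le (hX : 5 / 3 ≤ X) (hnN : n * X ^ 150 ≤ 2 * ν * N)
    (hqX : (q : ℝ) ≤ 2 * X ^ 40) : 1000 * (q ^ 2 * n * X ^ 40) ≤ ν * N :=
  calc 1000 * ((q : ℝ) ^ 2 * n * X ^ 40) ≤ 1000 * ((2 * X ^ 40) ^ 2 * n * X ^ 40) := by gcongr
    _ = n * (8000 * X ^ 120) / 2 := by ring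
    _ ≤ n * (X ^ 30 * X ^ 120) / 2 := by
        gcongr; exact le_pow_of_le_five_thirds_pow hX (by norm_num)
    _ = n * X ^ 150 / 2 := by ring
    _ ≤ ν * N := by linarith

lemma near_error_le {L : ℝ} (hX : 0 < X) (hν0 : 0 ≤ ν) (hν1 : ν ≤ 1) (hN : (0 : ℝ) < N)
    (hL0 : 0 ≤ L) (hL : 1000 * (L * X ^ 40) ≤ ν * N) (hS : 0 ≤ S) (hqX : (q : ℝ) ≤ 2 * X ^ 40) :
    2 * q * (2 * Real.pi * (L * (X ^ 20 / N)) * S) ^ 2 ≤ ν * S ^ 2 / 10 := by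
  have hLκ : L * (X ^ 20 / N) ≤ ν / (1000 * X ^ 20) := by
    rw [mul_div_assoc', div_le_div_iff₀ hN (by positivity)]
    linarith
  have hpi := Real.pi_le_four
  calc 2 * q * (2 * Real.pi * (L * (X ^ 20 / N)) * S) ^ 2
      ≤ 2 * (2 * X ^ 40) * (2 * 4 * (ν / (1000 * X ^ 20)) * S) ^ 2 := by gcongr
    _ = ν * S ^ 2 * ν * (256 / 10 ^ 6) := by field_simp; ring
    _ ≤ ν * S ^ 2 * 1 * (256 / 10 ^ 6) := by gcongr
    _ ≤ ν * S ^ 2 / 10 := by linarith [(by positivity : 0 ≤ ν * S ^ 2)]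

lemma NoSquareDiff.card_filter_den_le {B : ℝ} (hA : NoSquareDiff A) (hX : 5 / 3 ≤ X)
    (hAN : A ⊆ Finset.Icc 1 N) (hcard : A.card * X = N) (hN : 0 < N) (hν0 : 0 ≤ ν) (hν1 : ν ≤ 1)
    (hn : 0 < n) (hnN : n * X ^ 150 ≤ 2 * ν * N) (haX : a * X = 1 + ν / 20)
    (hD : SquareDiffBound n (a * n)) (hq : 0 < q) (hqX : (q : ℝ) ≤ 2 * X ^ 40) (hB : 0 < B)
    (G : Finset ℚ) (γ : ℚ → ℝ)
    (hG : ∀ x ∈ G, 0 < x ∧ x < 1 ∧ |γ x - x| ≤ X ^ 20 / N ∧ A.card ≤ B * ‖hatInd A (γ x)‖) :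
    ((G.filter fun x => x.den = q).card : ℝ) ≤ ν * B ^ 2 := by
  have hX0 : 0 < X := by linarith
  have hN0 : (0 : ℝ) < N := by exact_mod_cast hN
  have hS0 : (0 : ℝ) < A.card := pos_of_mul_pos_left (hcard ▸ hN0) hX0.le
  have hLX := thousand_mul_sq_mul_le hX hnN hqX
  have hL : 100 * ((q ^ 2 * n : ℕ) : ℝ) ≤ ν * N := by
    have hX40 : 1 ≤ X ^ 40 := one_le_pow₀ (by linarith)
    push_cast
    nlinarith [(by positivity : (0 : ℝ) ≤ q ^ 2 * n)]
  obtain ⟨J, -, hNJ, hJN⟩ := exists_lt_mul_le_add (by positivity : 0 < q ^ 2 * n) N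
  have hJ : ∀ x ∈ A, x / (q ^ 2 * n) < J := fun x hx =>
    Nat.div_lt_of_lt_mul (((Finset.mem_Icc.1 (hAN hx)).2.trans_lt hNJ).trans_eq (mul_comm _ _))
  have hmain := hA.sum_norm_sq_hatInd_near_le hn hD hq hJ (S := G.filter fun x => x.den = q)
    (fun x hx => by
      obtain ⟨hxG, hden⟩ := Finset.mem_filter.1 hx
      exact ⟨hden, (hG x hxG).1, (hG x hxG).2.1⟩) γ
    fun x hx => (hG x (Finset.mem_filter.1 hx).1).2.2.1
  have hlength : J * (q ^ 2 * (a * n)) * A.card ≤ (A.card * (1 + ν / 10)) * (A.card : ℝ) := by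
    have haJ := mul_length_le hX0 haX hcard hS0.le hν0 hν1 (T := (J * (q ^ 2 * n) : ℕ))
      (by exact_mod_cast hJN) hL
    push_cast at haJ
    exact mul_le_mul_of_nonneg_right (by linarith) hS0.le
  have herror := near_error_le hX0 hν0 hν1 hN0 (by positivity) hLX hS0.le hqX
  have hlow : ((G.filter fun x => x.den = q).card : ℝ) * (A.card / B) ^ 2 ≤
      ∑ x ∈ G.filter fun x => x.den = q, ‖hatInd A (γ x)‖ ^ 2 := by
    rw [← nsmul_eq_mul]
    refine Finset.card_nsmul_le_sum _ _ _ fun x hx => ?_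
    gcongr
    exact (div_le_iff₀' hB).2 (hG x (Finset.mem_filter.1 hx).1).2.2.2
  have hcount : ((G.filter fun x => x.den = q).card : ℝ) * (A.card / B) ^ 2 ≤
      ν * (A.card : ℝ) ^ 2 := by
    linarith [(by positivity : 0 ≤ ν * (A.card : ℝ) ^ 2)]
  rw [div_pow, mul_div_assoc', div_le_iff₀ (by positivity)] at hcount
  exact le_of_mul_le_mul_left (by linarith) (by positivity : 0 < (A.card : ℝ) ^ 2)

lemma mul_le_of_dyadic_scale {ℓ σ τ w b c : ℝ} (hS : 0 < S) (hℓ : 0 ≤ ℓ) (hw : 0 ≤ w)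
    (hc0 : 0 ≤ c) (hτ : 0 ≤ τ) (hσ : S ^ 2 ≤ 112640 * ℓ * σ)
    (hστ : σ * w ≤ 4 * S * (b * c) * τ) (hb : b ≤ 84 * ℓ) (hc : c ≤ 124 * ℓ) :
    S * w ≤ 10 ^ 10 * ℓ ^ 3 * τ := by
  refine le_of_mul_le_mul_left ?_ hS
  calc S * (S * w) = S ^ 2 * w := by ring
    _ ≤ 112640 * ℓ * σ * w := by gcongr
    _ = 112640 * ℓ * (σ * w) := by ring
    _ ≤ 112640 * ℓ * (4 * S * (b * c) * τ) := by gcongr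
    _ ≤ 112640 * ℓ * (4 * S * ((84 * ℓ) * (124 * ℓ)) * τ) := by gcongr
    _ = 4693032960 * (S * ℓ ^ 3 * τ) := by ring
    _ ≤ 10 ^ 10 * (S * ℓ ^ 3 * τ) := by gcongr; norm_num
    _ = S * (10 ^ 10 * ℓ ^ 3 * τ) := by ring

lemma NoSquareDiff.exists_popular_scale (hA : NoSquareDiff A) (hX : 5 / 3 ≤ X)
    (hAN : A ⊆ Finset.Icc 1 N) (hcard : A.card * X = N) (hN : X ^ 1000 ≤ N) (hν0 : 0 < ν)
    (hν : ν * Real.log X ≤ 1 / 10 ^ 7) (hn : 0 < n) (hnN : n * X ^ 150 ≤ 2 * ν * N)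
    (haX : a * X = 1 + ν / 20) (hD : SquareDiffBound n (a * n)) :
    ∃ B Q : ℝ, 0 < B ∧ B ≤ 4 * X ^ 60 ∧ 0 < Q ∧ Q ≤ 4 * X ^ 40 ∧ ∃ G : Finset ℚ,
      ∃ γ : ℚ → ℝ, (∀ x ∈ G, x ∈ farey ⌈X ^ 40⌉₊ ∧ (x.den : ℝ) ≤ Q ∧ γ x ∈ Set.Ioc (0 : ℝ) 1 ∧
          |γ x - x| ≤ X ^ 20 / N ∧ A.card ≤ B * ‖hatInd A (γ x)‖) ∧
        A.card * (B * √Q) ≤ 10 ^ 10 * Real.log X ^ 3 * ∑ x ∈ G, ‖hatInd A (γ x)‖ := by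
  have hX0 : 0 < X := by linarith
  have hℓ := half_le_log hX
  have hN0 : (0 : ℝ) < N := lt_of_lt_of_le (by positivity) hN
  have hS : (0 : ℝ) < A.card := pos_of_mul_pos_left (hcard ▸ hN0) hX0.le
  have hceil : ∀ k : ℕ, (⌈X ^ k⌉₊ : ℝ) ≤ 2 * X ^ k := fun k =>
    natCast_ceil_le_two_mul (one_le_pow₀ (by linarith))
  have hceil0 : ∀ k : ℕ, ⌈X ^ k⌉₊ ≠ 0 := fun k => (Nat.ceil_pos.2 (by positivity)).ne'
  set K := ⌈X ^ 40⌉₊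
  set L := ⌈X ^ 60⌉₊
  obtain ⟨γ, hγ, hsum⟩ := hA.sq_card_le_sum_div_sqrt hX hAN hcard hN hν0 hν hn hnN haX hD
    (Nat.le_ceil _) (hceil 40)
  set f : ℚ → ℝ := fun x => ‖hatInd A (γ x)‖
  have hlarge := sq_le_mul_sum_filter_large hX (hceil 40) (Nat.le_ceil (X ^ 60)) (card_farey_le K)
    (f := f) (fun x _ => norm_nonneg _) hsum
  set F := (farey K).filter fun x => (A.card : ℝ) ≤ L * f x
  have hF : ∀ x ∈ F, x ∈ farey K ∧ (A.card : ℝ) ≤ L * f x := fun x hx => Finset.mem_filter.1 hx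
  obtain ⟨i, hi, j, hj, G, hGF, hG, hGsum⟩ := exists_dyadic_scale F f Rat.den (K := K)
    (fun x hx => pos_of_mul_pos_right (hS.trans_le (hF x hx).2) L.cast_nonneg)
    (fun x _ => norm_hatInd_le A (γ x)) (fun x hx => (hF x hx).2) (fun x _ => x.pos)
    (fun x hx => (mem_farey.1 (hF x hx).1).2.2)
  refine ⟨2 ^ (i + 1), 2 ^ (j + 1), by positivity, ?_, by positivity, ?_, G, γ, fun x hx => ?_, ?_⟩
  · linarith [two_pow_succ_le_of_le_log (hceil0 60) (hceil 60) hi]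
  · linarith [two_pow_succ_le_of_le_log (hceil0 40) (hceil 40) hj]
  · have hfarey := (hF x (hGF hx)).1
    have hx01 := mem_farey.1 hfarey
    have hγx := hγ x hx01.1 hx01.2.1.le
    exact ⟨hfarey, by exact_mod_cast (hG x hx).1, hγx.1, hγx.2, (hG x hx).2.le⟩
  · have hlogK := natLog_two_add_one_le hX (hceil0 40) (hceil 40)
    have hlogL := natLog_two_add_one_le hX (hceil0 60) (hceil 60)
    push_cast at hlogK hlogL
    exact mul_le_of_dyadic_scale hS (by linarith) (by positivity) (by positivity)
      (Finset.sum_nonneg fun x _ => norm_nonneg _) hlarge hGsum (by linarith) (by linarith)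

end LargeFourier

/-! ### The dichotomy -/

section Dichotomy

/-- The density-increment alternative: the density `α` is beaten by the factor `1 + ν / 20` on an
interval `[N']` of length at least `c * ν * α ^ C * N`. -/
def HasDensityIncrement (c C ν : ℝ) (N : ℕ) (α : ℝ) : Prop :=
  ∃ N' : ℕ, c * ν * α ^ C * N ≤ (N' : ℝ) ∧
    ∃ A' : Finset ℕ, A' ⊆ Finset.Icc 1 N' ∧ NoSquareDiff A' ∧
      (1 + ν / 20) * α ≤ (A'.card : ℝ) / N'

/-- The Fourier alternative: `A` has many large Fourier coefficients at frequencies `γ x` near the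
rationals `x` of a set `𝓑` which contains few rationals of any given denominator. The distance to
the nearest integer is written `|t - round t|`. -/
def HasLargeFourierCoeffs (c C ν : ℝ) (A : Finset ℕ) (N : ℕ) (α : ℝ) : Prop :=
  ∃ B Q : ℝ, 0 < B ∧ B ≤ C * α ^ (-C) ∧ 0 < Q ∧ Q ≤ C * α ^ (-C) ∧
    ∃ 𝓑 : Finset ℚ,
      (∀ x ∈ 𝓑, (x.den : ℝ) ≤ Q ∧ 0 < x ∧ x ≤ 1) ∧
      (∃ γ : ℚ → ℝ,
        (∀ x ∈ 𝓑, γ x ∈ Set.Ioc (0 : ℝ) 1 ∧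
          |γ x - (x : ℝ) - round (γ x - (x : ℝ))| ≤ C * α ^ (-C) / N) ∧
        c * B * A.card * Real.sqrt Q / Real.log (1 / α) ^ (C : ℝ) ≤
          ∑ x ∈ 𝓑, ‖hatInd A (γ x)‖) ∧
      (∀ q : ℕ, 1 ≤ q → (q : ℝ) ≤ Q →
        ((𝓑.filter fun x => x.den = q).card : ℝ) ≤ ν * B ^ 2)

variable {A : Finset ℕ} {N n : ℕ} {X ν a : ℝ}

lemma inv_rpow_neg_ofNat (hX : 0 ≤ X) (k : ℕ) [k.AtLeastTwo] :
    X⁻¹ ^ (-(OfNat.ofNat k : ℝ)) = X ^ (OfNat.ofNat k : ℕ) := by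
  rw [Real.inv_rpow hX, Real.rpow_neg hX, inv_inv, Real.rpow_ofNat]

lemma SquareDiffBound.one_le {D : ℝ} (hD : SquareDiffBound n D) (hn : 0 < n) : 1 ≤ D := by
  have h := hD {1} (by simpa using Nat.succ_le_of_lt hn) fun a ha b hb m hm hab => by
    rw [Finset.mem_singleton] at ha hb
    have := pow_pos hm 2
    omega
  simpa using h

lemma hasDensityIncrement_of_not_squareDiffBound {c C α : ℝ} (hn : 0 < n)
    (hlen : c * ν * α ^ C * N ≤ n) (hD : ¬ SquareDiffBound n ((1 + ν / 20) * α * n)) :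
    HasDensityIncrement c C ν N α := by
  unfold SquareDiffBound at hD
  push Not at hD
  obtain ⟨A', hA'n, hA', hA'card⟩ := hD
  exact ⟨n, hlen, A', hA'n, hA', (le_div_iff₀ (by exact_mod_cast hn)).2 hA'card.le⟩

lemma NoSquareDiff.two_mul_card_le (hA : NoSquareDiff A) (hAN : A ⊆ Finset.Icc 1 N) :
    2 * A.card ≤ N + 1 := by
  have hdisj : Disjoint A (A.image (· + 1)) := by
    rw [Finset.disjoint_left]
    rintro a ha h
    obtain ⟨b, hb, rfl⟩ := Finset.mem_image.1 h
    exact hA _ ha b hb 1 one_pos rfl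
  have hsub : A ∪ A.image (· + 1) ⊆ Finset.Icc 1 (N + 1) := by
    refine Finset.union_subset (hAN.trans (Finset.Icc_subset_Icc_right N.le_succ)) ?_
    refine Finset.image_subset_iff.2 fun b hb => ?_
    have := Finset.mem_Icc.1 (hAN hb)
    exact Finset.mem_Icc.2 (by omega)
  have h := Finset.card_le_card hsub
  rw [Finset.card_union_of_disjoint hdisj,
    Finset.card_image_of_injective _ (add_left_injective 1), Nat.card_Icc] at h
  omega

lemma NoSquareDiff.five_thirds_le (hA : NoSquareDiff A) (hAN : A ⊆ Finset.Icc 1 N)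
    (hcard : A.card * X = N) (hN : 6 ≤ N) : 5 / 3 ≤ X := by
  have hA2 : (2 : ℝ) * A.card ≤ N + 1 := by exact_mod_cast hA.two_mul_card_le hAN
  have hN6 : (6 : ℝ) ≤ N := by exact_mod_cast hN
  by_contra! hX
  linarith [mul_le_mul_of_nonneg_left hX.le (A.card.cast_nonneg (α := ℝ))]

-- When `ν` is not much smaller than `1 / log X`, the zero frequency alone suffices.
lemma hasLargeFourierCoeffs_of_lt_mul_log (hX : 5 / 3 ≤ X) (hν : 1 / 10 ^ 7 < ν * Real.log X) :
    HasLargeFourierCoeffs (1 / 2 ^ 250) 200 ν A N X⁻¹ := by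
  have hX0 : 0 < X := by linarith
  have hℓ := half_le_log hX
  have hν0 : 0 < ν := pos_of_mul_pos_left ((by positivity : (0 : ℝ) < 1 / 10 ^ 7).trans hν)
    (by linarith)
  rw [HasLargeFourierCoeffs, inv_rpow_neg_ofNat hX0.le, one_div X⁻¹, inv_inv, Real.rpow_ofNat]
  refine ⟨2 * 10 ^ 7 * Real.log X, 1, by positivity, ?_, one_pos, ?_, {1}, by simp,
    ⟨fun _ => 1, fun x hx => ?_, ?_⟩, fun q _ _ => ?_⟩
  · calc 2 * 10 ^ 7 * Real.log X ≤ 200 * X ^ 199 * X := by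
          gcongr
          · norm_num
          · exact le_pow_of_le_five_thirds_pow hX (by norm_num)
          · exact Real.log_le_self hX0.le
      _ = 200 * X ^ 200 := by ring
  · linarith [one_le_pow₀ (by linarith : 1 ≤ X) (n := 200)]
  · rw [Finset.mem_singleton.1 hx]
    simp only [Set.mem_Ioc, zero_lt_one, le_refl, and_self, Rat.cast_one, sub_self, round_zero,
      Int.cast_zero, abs_zero, true_and]
    positivity
  · rw [Finset.sum_singleton, hatInd_one, Complex.norm_natCast, Real.sqrt_one,
      div_le_iff₀ (by positivity)]
    have hpow : 1 / 2 ^ 250 * (2 * 10 ^ 7 : ℝ) ≤ Real.log X ^ 199 :=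
      le_trans (by norm_num) (pow_le_pow_left₀ (by norm_num) hℓ 199)
    calc 1 / 2 ^ 250 * (2 * 10 ^ 7 * Real.log X) * A.card * 1
        = 1 / 2 ^ 250 * (2 * 10 ^ 7) * (A.card * Real.log X) := by ring
      _ ≤ Real.log X ^ 199 * (A.card * Real.log X) := by gcongr
      _ = A.card * Real.log X ^ 200 := by ring
  · calc ((({1} : Finset ℚ).filter fun x => x.den = q).card : ℝ) ≤ 1 := by
          exact_mod_cast (Finset.card_filter_le _ _).trans (Finset.card_singleton _).le
      _ ≤ 1 / 10 ^ 7 * (4 * 10 ^ 14 * (1 / 2)) := by norm_num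
      _ ≤ ν * Real.log X * (4 * 10 ^ 14 * Real.log X) := by gcongr
      _ = ν * (2 * 10 ^ 7 * Real.log X) ^ 2 := by ring

lemma NoSquareDiff.hasLargeFourierCoeffs (hA : NoSquareDiff A) (hX : 5 / 3 ≤ X)
    (hAN : A ⊆ Finset.Icc 1 N) (hcard : A.card * X = N) (hN : X ^ 1000 ≤ N) (hν0 : 0 < ν)
    (hν : ν * Real.log X ≤ 1 / 10 ^ 7) (hn : 0 < n) (hnN : n * X ^ 150 ≤ 2 * ν * N)
    (haX : a * X = 1 + ν / 20) (hD : SquareDiffBound n (a * n)) :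
    HasLargeFourierCoeffs (1 / 2 ^ 250) 200 ν A N X⁻¹ := by
  have hX0 : 0 < X := by linarith
  have hX1 : 1 ≤ X := by linarith
  have hN0 : (0 : ℝ) < N := lt_of_lt_of_le (by positivity) hN
  have hℓ := half_le_log hX
  obtain ⟨B, Q, hB0, hB, hQ0, hQ, G, γ, hG, hsum⟩ :=
    hA.exists_popular_scale hX hAN hcard hN hν0 hν hn hnN haX hD
  have hpow : ∀ k ≤ 200, 4 * X ^ k ≤ 200 * X ^ 200 := fun k hk => by gcongr; norm_num
  rw [HasLargeFourierCoeffs, inv_rpow_neg_ofNat hX0.le, one_div X⁻¹, inv_inv, Real.rpow_ofNat]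
  refine ⟨B, Q, hB0, hB.trans (hpow 60 (by norm_num)), hQ0, hQ.trans (hpow 40 (by norm_num)), G,
    fun x hx => ?_, ⟨γ, fun x hx => ⟨(hG x hx).2.2.1, ?_⟩, ?_⟩, fun q hq _ => ?_⟩
  · have hfarey := mem_farey.1 (hG x hx).1
    exact ⟨(hG x hx).2.1, hfarey.1, hfarey.2.1.le⟩
  · calc |γ x - x - round (γ x - x)| ≤ |γ x - x| := by simpa using round_le (γ x - x) 0
      _ ≤ X ^ 20 / N := (hG x hx).2.2.2.1
      _ ≤ 200 * X ^ 200 / N := by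
        gcongr
        exact (le_mul_of_one_le_left (by positivity) (by norm_num)).trans (hpow 20 (by norm_num))
  · rw [div_le_iff₀ (by positivity)]
    have hlog : 1 / 2 ^ 250 * (10 ^ 10 : ℝ) ≤ Real.log X ^ 197 :=
      le_trans (by norm_num) (pow_le_pow_left₀ (by norm_num) hℓ 197)
    calc 1 / 2 ^ 250 * B * A.card * √Q = 1 / 2 ^ 250 * (A.card * (B * √Q)) := by ring
      _ ≤ 1 / 2 ^ 250 * (10 ^ 10 * Real.log X ^ 3 * ∑ x ∈ G, ‖hatInd A (γ x)‖) := by gcongr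
      _ = 1 / 2 ^ 250 * 10 ^ 10 * (Real.log X ^ 3 * ∑ x ∈ G, ‖hatInd A (γ x)‖) := by ring
      _ ≤ Real.log X ^ 197 * (Real.log X ^ 3 * ∑ x ∈ G, ‖hatInd A (γ x)‖) := by gcongr
      _ = (∑ x ∈ G, ‖hatInd A (γ x)‖) * Real.log X ^ 200 := by ring
  · rcases (G.filter fun x => x.den = q).eq_empty_or_nonempty with hempty | ⟨x, hx⟩
    · rw [hempty, Finset.card_empty, Nat.cast_zero]
      positivity
    · obtain ⟨hxG, rfl⟩ := Finset.mem_filter.1 hx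
      have hden : (x.den : ℝ) ≤ 2 * X ^ 40 :=
        (Nat.cast_le.2 (mem_farey.1 (hG x hxG).1).2.2).trans
          (natCast_ceil_le_two_mul (one_le_pow₀ hX1))
      refine hA.card_filter_den_le hX hAN hcard (by exact_mod_cast hN0) hν0.le (by nlinarith) hn hnN
        haX hD hq hden hB0 G γ fun y hy => ?_
      have hfarey := mem_farey.1 (hG y hy).1
      exact ⟨hfarey.1, hfarey.2.1, (hG y hy).2.2.2⟩

lemma NoSquareDiff.hasDensityIncrement_or_hasLargeFourierCoeffs (hA : NoSquareDiff A)
    (hX : 5 / 3 ≤ X) (hAN : A ⊆ Finset.Icc 1 N) (hcard : A.card * X = N) (hN : X ^ 1000 ≤ N)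
    (hν0 : 0 < ν) :
    HasDensityIncrement (1 / 2 ^ 250) 200 ν N X⁻¹ ∨
      HasLargeFourierCoeffs (1 / 2 ^ 250) 200 ν A N X⁻¹ := by
  have hX1 : 1 ≤ X := by linarith
  have hN0 : (0 : ℝ) < N := lt_of_lt_of_le (by positivity) hN
  rcases lt_or_ge (1 / 10 ^ 7) (ν * Real.log X) with hν | hν
  · exact .inr (hasLargeFourierCoeffs_of_lt_mul_log hX hν)
  have haX : (1 + ν / 20) * X⁻¹ * X = 1 + ν / 20 := by field_simp
  set n := ⌈ν * N / X ^ 150⌉₊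
  have hn : 0 < n := Nat.ceil_pos.2 (by positivity)
  by_cases hD : SquareDiffBound n ((1 + ν / 20) * X⁻¹ * n)
  · have hlong : 1 ≤ ν * N / X ^ 150 := by
      by_contra! hshort
      have hn1 : n = 1 := le_antisymm (Nat.ceil_le.2 (by exact_mod_cast hshort.le)) hn
      have hone := hD.one_le hn
      rw [hn1, Nat.cast_one, mul_one] at hone
      nlinarith [half_le_log hX]
    refine .inr (hA.hasLargeFourierCoeffs hX hAN hcard hN hν0 hν hn ?_ haX hD)
    calc n * X ^ 150 ≤ 2 * (ν * N / X ^ 150) * X ^ 150 := by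
          gcongr; exact natCast_ceil_le_two_mul hlong
      _ = 2 * ν * N := by field_simp
  · refine .inl (hasDensityIncrement_of_not_squareDiffBound hn ?_ hD)
    calc 1 / 2 ^ 250 * ν * X⁻¹ ^ (200 : ℝ) * N = 1 / 2 ^ 250 * (ν * N / X ^ 200) := by
          rw [Real.rpow_ofNat, inv_pow]; ring
      _ ≤ 1 * (ν * N / X ^ 150) := by gcongr <;> norm_num
      _ ≤ n := by rw [one_mul]; exact Nat.le_ceil _

end Dichotomy

theorem statement_10_general :
    ∃ c > (0 : ℝ), ∃ C > (0 : ℝ), ∃ N₀ : ℕ, ∀ N : ℕ, N₀ ≤ N → ∀ ν : ℝ, 0 < ν →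
      ∀ A : Finset ℕ, A ⊆ Finset.Icc 1 N → NoSquareDiff A → A.Nonempty →
      ∀ α : ℝ, α = (A.card : ℝ) / N →
      c * Real.log N ≤ Real.log (1 / α) ∨ HasDensityIncrement c C ν N α ∨
        HasLargeFourierCoeffs c C ν A N α := by
  refine ⟨1 / 2 ^ 250, by positivity, 200, by norm_num, 6, ?_⟩
  intro N hN ν hν A hAN hA hne α hα
  refine or_iff_not_imp_left.2 fun hdense => ?_
  have hN0 : (0 : ℝ) < N := by exact_mod_cast (by omega : 0 < N)
  have hA0 : (0 : ℝ) < A.card := by exact_mod_cast hne.card_pos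
  obtain ⟨X, rfl⟩ : ∃ X, α = X⁻¹ := ⟨α⁻¹, (inv_inv α).symm⟩
  have hcard : A.card * X = N := by
    rw [← inv_inv X, hα]
    field_simp
  have hX0 : 0 < X := pos_of_mul_pos_right (hcard ▸ hN0) hA0.le
  refine hA.hasDensityIncrement_or_hasLargeFourierCoeffs (hA.five_thirds_le hAN hcard hN) hAN hcard
    ?_ hν
  rw [← Real.log_le_log_iff (by positivity) hN0, Real.log_pow]
  rw [one_div X⁻¹, inv_inv, not_le] at hdense
  push_cast
  linarith [Real.log_natCast_nonneg N]

theorem statement_10 :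
    ∃ c > (0 : ℝ), ∃ C > (0 : ℝ), ∃ N₀ : ℕ, ∀ N : ℕ, N₀ ≤ N → ∀ ν : ℝ, 0 < ν →
      ∀ A : Finset ℕ, A ⊆ Finset.Icc 1 N → NoSquareDiff A →
      ∀ α : ℝ, α = (A.card : ℝ) / N → (N : ℝ) ^ (-(1 / 3) : ℝ) ≤ α →
      -- (1) A is sparse
      (c * Real.log N ≤ Real.log (1 / α)) ∨
      -- (2) there is a density increment
      (∃ N' : ℕ, c * ν * α ^ C * N ≤ (N' : ℝ) ∧
        ∃ A' : Finset ℕ, A' ⊆ Finset.Icc 1 N' ∧ NoSquareDiff A' ∧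
          (1 + ν / 20) * α ≤ (A'.card : ℝ) / N') ∨
      -- (3) many large Fourier coefficients close to rationals of different denominators
      (∃ B Q : ℝ, 0 < B ∧ B ≤ C * α ^ (-C) ∧ 0 < Q ∧ Q ≤ C * α ^ (-C) ∧
        ∃ 𝓑 : Finset ℚ,
          (∀ x ∈ 𝓑, (x.den : ℝ) ≤ Q ∧ 0 < x ∧ x ≤ 1) ∧
          (∃ γ : ℚ → ℝ,
            (∀ x ∈ 𝓑, γ x ∈ Set.Ioc (0 : ℝ) 1 ∧
              |γ x - (x : ℝ) - round (γ x - (x : ℝ))| ≤ C * α ^ (-C) / N) ∧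
            c * B * A.card * Real.sqrt Q / Real.log (1 / α) ^ (C : ℝ) ≤
              ∑ x ∈ 𝓑, ‖hatInd A (γ x)‖) ∧
          (∀ q : ℕ, 1 ≤ q → (q : ℝ) ≤ Q →
            ((𝓑.filter fun x => x.den = q).card : ℝ) ≤ ν * B ^ 2)) := by
  obtain ⟨c, hc, C, hC, N₀, h⟩ := statement_10_general
  refine ⟨c, hc, C, hC, max N₀ 1, fun N hN ν hν A hAN hA α hα hαN => ?_⟩
  have hα0 : 0 < α :=
    (Real.rpow_pos_of_pos (by exact_mod_cast le_of_max_le_right hN) _).trans_le hαN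
  have hne : A.Nonempty := by
    rw [Finset.nonempty_iff_ne_empty]
    rintro rfl
    simp [hα] at hα0
  exact h N (le_of_max_le_left hN) ν hν A hAN hA hne α hα
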